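/- arXiv:2410.06148 — 8 statements merged into one kernel-verified Lean document; each statement's English description precedes it below -/
import Mathlib

section
/- Let η ∈ (0, 1/4) and δ > 0 be constants. Then there exists n₀ such that for every integer n ≥ n₀, every forest F on n vertices whose maximum degree Δ satisfies 15 ≤ Δ ≤ (1/4 − η)n, and every balanced colouring c : E(K_n) → {−1, +1} of the edges of K_n, there exists a copy F' of F in K_n such that |c(F')| ≤ (1 + δ)·(4/η). -/
open Finset

lemma abs_leaf {V : Type*} [Fintype V] [DecidableEq V] (F : SimpleGraph V) [DecidableRel F.Adj]
    (hF : F.IsAcyclic) (H : Finset V) (hH : H.Nonempty) :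
    ∃ u ∈ H, (F.neighborFinset u ∩ H).card ≤ 1 := by
  classical
  let G := F.induce (H : Set V)
  have hG : G.IsAcyclic := hF.induce _
  have : Nonempty (H : Set V) := ⟨⟨hH.choose, hH.choose_spec⟩⟩
  obtain ⟨T, hGT, -, hTree⟩ := (SimpleGraph.connected_top (V := (H : Set V))).exists_isTree_le_of_le_of_isAcyclic
    (le_top : G ≤ ⊤) hG
  obtain ⟨v, hv⟩ : ∃ v, T.degree v ≤ 1 := by
    rcases subsingleton_or_nontrivial (H : Set V) with h | h
    · refine ⟨Classical.arbitrary _, ?_⟩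
      have : T = ⊥ := Subsingleton.elim _ _
      subst this
      simp
    · obtain ⟨v, hv⟩ := hTree.exists_vert_degree_one_of_nontrivial
      exact ⟨v, hv.le⟩
  refine ⟨v, v.2, ?_⟩
  refine le_trans ?_ hv
  rw [← SimpleGraph.card_neighborFinset_eq_degree]
  rw [← Finset.card_map (Function.Embedding.subtype _)]
  apply Finset.card_le_card
  intro w hw
  simp only [mem_inter, SimpleGraph.mem_neighborFinset] at hw
  simp only [mem_map, SimpleGraph.mem_neighborFinset]
  exact ⟨⟨w, hw.2⟩, hGT hw.1, rfl⟩

lemma abs_degH {V : Type*} [Fintype V] [DecidableEq V] (F : SimpleGraph V) [DecidableRel F.Adj]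
    (hF : F.IsAcyclic) (H : Finset V) :
    ∑ u ∈ H, (F.neighborFinset u ∩ H).card ≤ 2 * H.card := by
  induction H using Finset.strongInduction with
  | H H ih =>
  rcases H.eq_empty_or_nonempty with rfl | hH
  · simp
  obtain ⟨u, hu, hu1⟩ := abs_leaf F hF H hH
  have h1 := ih (H.erase u) (Finset.erase_ssubset hu)
  rw [Finset.card_erase_of_mem hu] at h1
  rw [← Finset.add_sum_erase _ _ hu]
  have h2 : ∑ x ∈ H.erase u, (F.neighborFinset x ∩ H).card
      = ∑ x ∈ H.erase u, ((F.neighborFinset x ∩ H.erase u).card + if F.Adj u x then 1 else 0) := by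
    apply Finset.sum_congr rfl
    intro x hx
    by_cases h : F.Adj u x
    · have : u ∈ F.neighborFinset x ∩ H := by simp [hu, h.symm]
      rw [if_pos h, Finset.inter_erase, Finset.card_erase_add_one this]
    · have : u ∉ F.neighborFinset x ∩ H := by simp [h, F.adj_comm x u]
      rw [if_neg h, Finset.inter_erase, Finset.erase_eq_of_notMem this, add_zero]
  have h3 : ∑ x ∈ H.erase u, (if F.Adj u x then 1 else 0) ≤ (F.neighborFinset u ∩ H).card := by
    rw [← Finset.card_filter]
    apply Finset.card_le_card
    intro x hx
    simp at hx ⊢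
    tauto
  rw [h2, Finset.sum_add_distrib]
  have : 0 < H.card := hH.card_pos
  omega

lemma abs_degSum {V : Type*} [Fintype V] [DecidableEq V] (F : SimpleGraph V) [DecidableRel F.Adj]
    (hF : F.IsAcyclic) (H : Finset V) :
    ∑ u ∈ H, F.degree u ≤ Fintype.card V + H.card := by
  have h1 := abs_degH F hF H
  have h2 := abs_degH F hF univ
  simp only [inter_univ, card_univ, SimpleGraph.card_neighborFinset_eq_degree] at h2
  have h3 : ∀ u, F.degree u = (F.neighborFinset u ∩ H).card + (F.neighborFinset u ∩ Hᶜ).card := by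
    intro u
    rw [← SimpleGraph.card_neighborFinset_eq_degree, ← Finset.sdiff_eq_inter_compl,
      Finset.card_inter_add_card_sdiff]
  have h4 : ∑ u ∈ H, (F.neighborFinset u ∩ Hᶜ).card = ∑ u ∈ Hᶜ, (F.neighborFinset u ∩ H).card := by
    have e1 : ∀ (A : Finset V) u, (F.neighborFinset u ∩ A).card = ∑ x ∈ A, if F.Adj u x then 1 else 0 := by
      intro A u
      rw [← Finset.card_filter]
      congr 1
      ext x
      simp [and_comm]
    simp only [e1]
    rw [Finset.sum_comm]
    simp only [F.adj_comm]
  have h5 : ∑ u ∈ H, F.degree u = ∑ u ∈ H, (F.neighborFinset u ∩ H).card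
      + ∑ u ∈ H, (F.neighborFinset u ∩ Hᶜ).card := by
    rw [← Finset.sum_add_distrib]
    exact Finset.sum_congr rfl fun u _ => h3 u
  have h6 : ∑ u ∈ Hᶜ, (F.neighborFinset u ∩ H).card ≤ ∑ u ∈ Hᶜ, F.degree u := by
    apply Finset.sum_le_sum
    intro u _
    rw [h3 u]; omega
  have h7 := Finset.sum_add_sum_compl H (fun u => F.degree u)
  omega

/-- Choose a subset of prescribed size with small sum. -/
lemma abs_subset {V : Type*} [DecidableEq V] (h : V → ℤ) (j : ℕ) : ∀ (A : Finset V) (m : ℕ),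
    (∀ x ∈ A, h x = 2 ∨ h x = 0 ∨ h x = -2) → A.card = m + j →
    |∑ x ∈ A, h x| ≤ 2 * j + 2 →
    ∃ X ⊆ A, X.card = m ∧ |∑ x ∈ X, h x| ≤ 2 := by
  induction j with
  | zero =>
    intro A m _ hc hs
    exact ⟨A, Subset.rfl, by simpa using hc, by simpa using hs⟩
  | succ j ih =>
    intro A m hv hc hs
    obtain ⟨x, hx, hx2⟩ : ∃ x ∈ A, |(∑ y ∈ A, h y) - h x| ≤ 2 * j + 2 := by
      have hne : A.Nonempty := by
        rw [← Finset.card_pos]; omega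
      push_cast at hs
      rcases lt_trichotomy (∑ y ∈ A, h y) 0 with hlt | heq | hgt
      · obtain ⟨x, hx, hx0⟩ := Finset.exists_lt_of_sum_lt (s := A) (f := h) (g := fun _ => 0)
          (by simpa using hlt)
        refine ⟨x, hx, ?_⟩
        have := hv x hx
        rw [abs_le] at *
        omega
      · obtain ⟨x, hx⟩ := hne
        refine ⟨x, hx, ?_⟩
        have := hv x hx
        rw [abs_le] at *
        omega
      · obtain ⟨x, hx, hx0⟩ := Finset.exists_lt_of_sum_lt (s := A) (g := h) (f := fun _ => 0)
          (by simpa using hgt)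
        refine ⟨x, hx, ?_⟩
        have := hv x hx
        rw [abs_le] at *
        omega
    have he := Finset.add_sum_erase A h hx
    obtain ⟨X, hX, hX1, hX2⟩ := ih (A.erase x) m (fun y hy => hv y (Finset.mem_of_mem_erase hy))
      (by rw [Finset.card_erase_of_mem hx]; omega)
      (by rwa [show ∑ y ∈ A.erase x, h y = (∑ y ∈ A, h y) - h x by omega])
    exact ⟨X, hX.trans (Finset.erase_subset _ _), hX1, hX2⟩

/-- The colour sum of the copy of `F` given by `f`. -/
def absC {V : Type*} [Fintype V] [DecidableEq V] (F : SimpleGraph V) [DecidableRel F.Adj]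
    (c : Sym2 V → ℤ) (f : Equiv.Perm V) : ℤ := ∑ e ∈ F.edgeFinset, c (Sym2.map f e)

lemma abs_swap_diff {V : Type*} [Fintype V] [DecidableEq V] (F : SimpleGraph V)
    [DecidableRel F.Adj] (c : Sym2 V → ℤ) (hc1 : ∀ e, |c e| ≤ 1) (f : Equiv.Perm V) (u v : V) :
    |absC F c f - absC F c (f * Equiv.swap u v)| ≤
      |∑ w ∈ (F.neighborFinset u).erase v, (c s(f u, f w) - c s(f v, f w))| + 2 * F.degree v := by
  classical
  set g : Sym2 V → ℤ := fun e => c (Sym2.map f e) - c (Sym2.map (f * Equiv.swap u v) e) with hg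
  have hg2 : ∀ e, |g e| ≤ 2 := by
    intro e
    have h1 := hc1 (Sym2.map f e)
    have h2 := hc1 (Sym2.map (f * Equiv.swap u v) e)
    simp only [hg]
    rw [abs_le] at *
    omega
  have h1 : absC F c f - absC F c (f * Equiv.swap u v) = ∑ e ∈ F.edgeFinset, g e := by
    simp only [absC, hg, Finset.sum_sub_distrib]
  have h0 : ∀ e, u ∉ e → v ∉ e → g e = 0 := by
    intro e
    induction e using Sym2.inductionOn with
    | hf x y =>
      intro hu hv
      simp only [Sym2.mem_iff, not_or] at hu hv
      simp only [hg, Sym2.map_mk, Equiv.Perm.coe_mul, Function.comp]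
      rw [Equiv.swap_apply_of_ne_of_ne (Ne.symm hu.1) (Ne.symm hv.1),
        Equiv.swap_apply_of_ne_of_ne (Ne.symm hu.2) (Ne.symm hv.2)]
      simp
  have h2 : ∑ e ∈ F.edgeFinset, g e = ∑ e ∈ F.incidenceFinset u, g e
      + ∑ e ∈ F.incidenceFinset v \ F.incidenceFinset u, g e := by
    rw [← Finset.sum_union (Finset.disjoint_sdiff)]
    symm
    apply Finset.sum_subset
    · intro e he
      simp only [mem_union, mem_sdiff] at he
      rcases he with he | he
      · exact F.incidenceFinset_subset u he
      · exact F.incidenceFinset_subset v he.1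
    · intro e he hn
      rw [SimpleGraph.mem_edgeFinset] at he
      apply h0
      · intro hu
        apply hn
        simp [SimpleGraph.mem_incidenceFinset, SimpleGraph.incidenceSet, he, hu]
      · intro hu
        apply hn
        simp [SimpleGraph.mem_incidenceFinset, SimpleGraph.incidenceSet, he, hu]
  have h3 : |∑ e ∈ F.incidenceFinset v \ F.incidenceFinset u, g e| ≤ 2 * F.degree v := by
    calc _ ≤ ∑ e ∈ F.incidenceFinset v \ F.incidenceFinset u, |g e| := Finset.abs_sum_le_sum_abs _ _
      _ ≤ ∑ e ∈ F.incidenceFinset v, |g e| :=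
        Finset.sum_le_sum_of_subset_of_nonneg Finset.sdiff_subset (fun _ _ _ => abs_nonneg _)
      _ ≤ ∑ e ∈ F.incidenceFinset v, 2 := Finset.sum_le_sum fun e _ => hg2 e
      _ = 2 * F.degree v := by
        rw [Finset.sum_const, F.card_incidenceFinset_eq_degree]; simp [mul_comm]
  have h4 : ∑ e ∈ F.incidenceFinset u, g e = ∑ w ∈ F.neighborFinset u, g s(u, w) := by
    symm
    apply Finset.sum_bij (fun w _ => s(u, w))
    · intro w hw
      simpa using hw
    · intro a _ b _ h
      exact Sym2.congr_right.mp h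
    · intro e he
      rw [SimpleGraph.mem_incidenceFinset] at he
      obtain ⟨he1, he2⟩ := he
      obtain ⟨w, rfl⟩ := he2
      exact ⟨w, by simpa using he1, rfl⟩
    · intros; rfl
  have h5 : ∑ w ∈ F.neighborFinset u, g s(u, w) =
      ∑ w ∈ (F.neighborFinset u).erase v, (c s(f u, f w) - c s(f v, f w)) := by
    rw [← Finset.sum_erase (s := F.neighborFinset u) (f := fun w => g s(u, w)) (a := v)]
    · apply Finset.sum_congr rfl
      intro w hw
      simp only [mem_erase, SimpleGraph.mem_neighborFinset] at hw
      simp only [hg, Sym2.map_mk, Equiv.Perm.coe_mul, Function.comp, Equiv.swap_apply_left]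
      rw [Equiv.swap_apply_of_ne_of_ne hw.2.ne' hw.1]
    · simp only [hg, Sym2.map_mk, Equiv.Perm.coe_mul, Function.comp, Equiv.swap_apply_left,
        Equiv.swap_apply_right]
      rw [Sym2.eq_swap, sub_self]
  rw [h1, h2, h4, h5]
  exact (abs_add_le _ _).trans (by linarith)

lemma abs_avg {V : Type*} [Fintype V] [DecidableEq V] (F : SimpleGraph V)
    [DecidableRel F.Adj] (c : Sym2 V → ℤ)
    (hc : ∑ e ∈ (⊤ : SimpleGraph V).edgeFinset, c e = 0) :
    ∑ f : Equiv.Perm V, absC F c f = 0 := by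
  classical
  simp only [absC]
  rw [Finset.sum_comm]
  apply Finset.sum_eq_zero
  intro e he
  have he' : e ∈ (⊤ : SimpleGraph V).edgeFinset := by
    rw [SimpleGraph.mem_edgeFinset] at *
    exact SimpleGraph.edgeSet_mono le_top he
  set S : Sym2 V → ℤ := fun e => ∑ f : Equiv.Perm V, c (Sym2.map f e) with hS
  have hSS : ∀ (σ : Equiv.Perm V) e, S (Sym2.map σ e) = S e := by
    intro σ e
    simp only [hS, Sym2.map_map]
    exact Fintype.sum_equiv (Equiv.mulRight σ) _ _ (fun f => rfl)
  have hconst : ∀ e' ∈ (⊤ : SimpleGraph V).edgeFinset, S e' = S e := by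
    intro e' he2
    induction e using Sym2.inductionOn with
    | hf x y =>
    induction e' using Sym2.inductionOn with
    | hf z w =>
      simp at he' he2
      let σ := Equiv.swap (Equiv.swap x z y) w * Equiv.swap x z
      have hσ : Sym2.map σ s(x, y) = s(z, w) := by
        have h1 : σ y = w := by simp [σ]
        have h2 : σ x = z := by
          simp only [σ, Equiv.Perm.coe_mul, Function.comp, Equiv.swap_apply_left]
          apply Equiv.swap_apply_of_ne_of_ne
          · intro h
            have : Equiv.swap x z x = Equiv.swap x z y := by rw [Equiv.swap_apply_left]; exact h
            exact he' ((Equiv.swap x z).injective this)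
          · exact he2
        simp [h1, h2]
      rw [← hσ, hSS]
  have htot : ∑ e' ∈ (⊤ : SimpleGraph V).edgeFinset, S e' = 0 := by
    simp only [hS]
    rw [Finset.sum_comm]
    apply Finset.sum_eq_zero
    intro f _
    rw [← hc]
    apply Finset.sum_nbij' (Sym2.map f) (Sym2.map f.symm)
    · intro e
      induction e using Sym2.inductionOn with
      | hf x y => simp
    · intro e
      induction e using Sym2.inductionOn with
      | hf x y => simp
    · intro e _
      simp [Sym2.map_map]
    · intro e _
      simp [Sym2.map_map]
    · intro e _
      rfl
  rw [Finset.sum_congr rfl hconst, Finset.sum_const, nsmul_eq_mul] at htot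
  rcases mul_eq_zero.mp htot with h | h
  · exfalso
    have := Finset.card_pos.mpr ⟨e, he'⟩
    have h' : (⊤ : SimpleGraph V).edgeFinset.card = 0 := by exact_mod_cast h
    omega
  · exact h

lemma abs_total {V : Type*} [Fintype V] [DecidableEq V] (c : Sym2 V → ℤ)
    (hd : ∀ x, c s(x, x) = 0)
    (hc : ∑ e ∈ (⊤ : SimpleGraph V).edgeFinset, c e = 0) :
    ∑ x, ∑ y, c s(x, y) = 0 := by
  classical
  have h1 : ∑ d : (⊤ : SimpleGraph V).Dart, c d.edge = 0 := by
    rw [← Finset.sum_fiberwise_of_maps_to (t := (⊤ : SimpleGraph V).edgeFinset)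
      (g := fun d => d.edge) (fun d _ => by simpa using d.edge_mem)]
    have : ∀ e ∈ (⊤ : SimpleGraph V).edgeFinset,
        ∑ d : (⊤ : SimpleGraph V).Dart with d.edge = e, c d.edge = 2 * c e := by
      intro e he
      rw [Finset.sum_congr rfl (g := fun _ => c e) (by intro d hd; simp at hd; rw [hd]),
        Finset.sum_const, SimpleGraph.dart_edge_fiber_card]
      · simp
      · simpa using he
    rw [Finset.sum_congr rfl this, ← Finset.mul_sum, hc, mul_zero]
  rw [← Fintype.sum_prod_type' (f := fun x y => c s(x, y))]
  rw [← h1]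
  symm
  apply Finset.sum_of_injOn (fun d => d.toProd)
  · intro a _ b _ h
    exact SimpleGraph.Dart.toProd_injective h
  · intro d _; simp
  · intro p _ hp
    by_cases h : p.1 = p.2
    · rw [h, hd]
    · exfalso
      apply hp
      simp only [coe_univ, Set.image_univ, Set.mem_range]
      exact ⟨⟨p, h⟩, rfl⟩
  · intro d _
    rfl

lemma abs_conn_num (n r b s E DR DB DS : ℤ) (hn : 0 < n) (hr : 0 < r) (hb : 0 < b)
    (hsum : r + b + s = n) (hs : 12 * s ≤ n)
    (hE1 : E ≤ r * b) (hE2 : -(r * b) ≤ E)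
    (h0 : DR + DB + DS = 0) (hDS : DS ≤ s * n) (hDS' : -(s * n) ≤ DS)
    (hR1 : DR ≤ r * n) (hR2 : r * n ≤ 2 * DR) (hB1 : -(b * n) ≤ DB) (hB2 : 2 * DB ≤ -(b * n))
    (hR : DR ≤ E + r * (n - b)) (hB : E - b * (n - r) ≤ DB)
    (hmain : r * b * (3 * n + 1) ≤ 2 * (b * DR - r * DB)) : False := by
  have k1 : b ≤ 2 * (r + s) := by
    by_contra h
    push Not at h
    have : 2 * (r + s) * n < b * n := mul_lt_mul_of_pos_right h hn
    nlinarith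
  have k2 : r ≤ 2 * (b + s) := by
    by_contra h
    push Not at h
    have : 2 * (b + s) * n < r * n := mul_lt_mul_of_pos_right h hn
    nlinarith
  have k3 : b * DR ≤ b * (E + r * (n - b)) := mul_le_mul_of_nonneg_left hR hb.le
  have k4 : r * (E - b * (n - r)) ≤ r * DB := mul_le_mul_of_nonneg_left hB hr.le
  have k5 : r * b * (3 * n + 1) ≤ 2 * (E * (b - r) + r * b * (n + s)) := by
    have : n + s = (n - b) + (n - r) := by linarith
    rw [this]
    linarith
  have hrb : 0 < r * b := mul_pos hr hb
  rcases le_total r b with h | h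
  · have k6 : E * (b - r) ≤ r * b * (b - r) := mul_le_mul_of_nonneg_right hE1 (by linarith)
    have k7 : r * b * (3 * n + 1) ≤ r * b * (2 * ((b - r) + (n + s))) := by linarith
    have k8 := le_of_mul_le_mul_left k7 hrb
    linarith
  · have k6 : E * (b - r) ≤ r * b * (r - b) := by
      have := mul_le_mul_of_nonneg_right hE2 (sub_nonneg.mpr h)
      linarith
    have k7 : r * b * (3 * n + 1) ≤ r * b * (2 * ((r - b) + (n + s))) := by linarith
    have k8 := le_of_mul_le_mul_left k7 hrb
    linarith

lemma abs_conn {V : Type*} [Fintype V] [DecidableEq V] (c : Sym2 V → ℤ)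
    (hc1 : ∀ e, |c e| ≤ 1) (hd : ∀ x, c s(x, x) = 0)
    (hc : ∑ e ∈ (⊤ : SimpleGraph V).edgeFinset, c e = 0) (S : Finset V)
    (hS : 12 * S.card ≤ Fintype.card V) (a b : V) (ha : a ∉ S) (hb : b ∉ S)
    (d : V → ℤ) (hdd : d = fun x => ∑ y, c s(x, y)) :
    Relation.ReflTransGen
      (fun x y => x ∉ S ∧ y ∉ S ∧ 2 * |d x - d y| ≤ 3 * (Fintype.card V : ℤ)) a b := by
  classical
  set P : V → V → Prop :=
    (fun x y => x ∉ S ∧ y ∉ S ∧ 2 * |d x - d y| ≤ 3 * (Fintype.card V : ℤ)) with hP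
  set n : ℤ := (Fintype.card V : ℤ) with hn
  have hsymm : ∀ x y, P x y → P y x := by
    intro x y h
    refine ⟨h.2.1, h.1, ?_⟩
    rw [abs_sub_comm]; exact h.2.2
  have hcsum : ∀ x (A : Finset V), |∑ y ∈ A, c s(x, y)| ≤ A.card := by
    intro x A
    calc _ ≤ ∑ y ∈ A, |c s(x, y)| := Finset.abs_sum_le_sum_abs _ _
      _ ≤ ∑ y ∈ A, 1 := Finset.sum_le_sum fun y _ => hc1 _
      _ = A.card := by simp
  have hdn : ∀ x, |d x| ≤ n := by
    intro x
    have := hcsum x univ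
    rw [hdd]
    simpa [hn] using this
  have hn0 : 0 < n := by
    have : 0 < Fintype.card V := Fintype.card_pos_iff.mpr ⟨a⟩
    omega
  have mkP : ∀ x y, x ∉ S → y ∉ S → 2 * (d x - d y) ≤ 3 * n → 2 * (d y - d x) ≤ 3 * n → P x y := by
    intro x y hx hy h1 h2
    refine ⟨hx, hy, ?_⟩
    rcases abs_cases (d x - d y) with h | h <;> omega
  have key : ∀ a b, a ∉ S → b ∉ S → d b ≤ d a → Relation.ReflTransGen P a b := by
    intro a b ha hb hab
    by_cases hclose : 2 * |d a - d b| ≤ 3 * n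
    · exact Relation.ReflTransGen.single ⟨ha, hb, hclose⟩
    rw [abs_of_nonneg (by linarith)] at hclose
    push Not at hclose
    have hda := abs_le.mp (hdn a)
    have hdb := abs_le.mp (hdn b)
    by_cases hm : ∃ m, m ∉ S ∧ 2 * d m ≤ n ∧ -n ≤ 2 * d m
    · obtain ⟨m, hmS, hm1, hm2⟩ := hm
      have e1 : P a m := mkP a m ha hmS (by linarith) (by linarith)
      have e2 : P m b := mkP m b hmS hb (by linarith) (by linarith)
      exact (Relation.ReflTransGen.single e1).tail e2
    by_cases hpq : ∃ p q, p ∉ S ∧ q ∉ S ∧ n < 2 * d p ∧ 2 * d q < -n ∧ 2 * (d p - d q) ≤ 3 * n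
    · obtain ⟨p, q, hp, hq, hp1, hq1, hpq⟩ := hpq
      have hdp := abs_le.mp (hdn p)
      have hdq := abs_le.mp (hdn q)
      have e1 : P a p := mkP a p ha hp (by linarith) (by linarith)
      have e2 : P p q := mkP p q hp hq (by linarith) (by linarith)
      have e3 : P q b := mkP q b hq hb (by linarith) (by linarith)
      exact ((Relation.ReflTransGen.single e1).tail e2).tail e3
    exfalso
    push Not at hm hpq
    set R : Finset V := univ.filter (fun x => x ∉ S ∧ n < 2 * d x) with hR
    set B : Finset V := univ.filter (fun x => x ∉ S ∧ 2 * d x < -n) with hB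
    have haR : a ∈ R := by
      simp only [hR, mem_filter, mem_univ, true_and]
      exact ⟨ha, by linarith⟩
    have hbB : b ∈ B := by
      simp only [hB, mem_filter, mem_univ, true_and]
      exact ⟨hb, by linarith⟩
    have hRB : Disjoint R B := by
      rw [Finset.disjoint_left]
      intro x hx hx'
      simp only [hR, hB, mem_filter, mem_univ, true_and] at hx hx'
      linarith [hx.2, hx'.2]
    have hRBS : Disjoint (R ∪ B) S := by
      rw [Finset.disjoint_left]
      intro x hx
      simp only [hR, hB, mem_union, mem_filter, mem_univ, true_and] at hx
      tauto
    have huniv : (R ∪ B) ∪ S = univ := by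
      ext x
      simp only [hR, hB, mem_union, mem_filter, mem_univ, true_and, iff_true]
      by_cases hx : x ∈ S
      · exact Or.inr hx
      · left
        have := hm x hx
        by_cases h : n < 2 * d x
        · exact Or.inl ⟨hx, h⟩
        · exact Or.inr ⟨hx, this (by linarith)⟩
    have hcard : (R.card : ℤ) + B.card + S.card = n := by
      have h1 := Finset.card_union_of_disjoint hRBS
      rw [huniv, Finset.card_union_of_disjoint hRB, card_univ] at h1
      omega
    have htot : ∑ x ∈ R, d x + ∑ x ∈ B, d x + ∑ x ∈ S, d x = 0 := by
      rw [← Finset.sum_union hRB, ← Finset.sum_union hRBS, huniv, hdd]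
      exact abs_total c hd hc
    have hbd : ∀ A : Finset V, ∑ x ∈ A, d x ≤ A.card * n ∧ -(A.card * n) ≤ ∑ x ∈ A, d x := by
      intro A
      constructor
      · have := Finset.sum_le_card_nsmul A d n (fun x _ => (abs_le.mp (hdn x)).2)
        simpa using this
      · have := Finset.card_nsmul_le_sum A d (-n) (fun x _ => (abs_le.mp (hdn x)).1)
        simpa using this
    have hR2 : (R.card : ℤ) * n ≤ 2 * ∑ x ∈ R, d x := by
      rw [Finset.mul_sum]
      have := Finset.card_nsmul_le_sum R (fun x => 2 * d x) n (fun x hx => by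
        simp only [hR, mem_filter] at hx; exact hx.2.2.le)
      simpa using this
    have hB2 : 2 * ∑ x ∈ B, d x ≤ -((B.card : ℤ) * n) := by
      rw [Finset.mul_sum]
      have := Finset.sum_le_card_nsmul B (fun x => 2 * d x) (-n) (fun x hx => by
        simp only [hB, mem_filter] at hx; exact hx.2.2.le)
      simpa using this
    have hsplit : ∀ (X Y : Finset V), |∑ x ∈ X, d x - ∑ x ∈ X, ∑ y ∈ Y, c s(x, y)|
        ≤ X.card * (n - Y.card) := by
      intro X Y
      rw [← Finset.sum_sub_distrib]
      calc _ ≤ ∑ x ∈ X, |d x - ∑ y ∈ Y, c s(x, y)| := Finset.abs_sum_le_sum_abs _ _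
        _ ≤ ∑ x ∈ X, (n - Y.card) := by
          apply Finset.sum_le_sum
          intro x _
          have h1 : d x - ∑ y ∈ Y, c s(x, y) = ∑ y ∈ Yᶜ, c s(x, y) := by
            rw [hdd]
            simp only
            rw [← Finset.sum_add_sum_compl Y]
            ring
          rw [h1]
          refine (hcsum x _).trans ?_
          rw [Finset.card_compl, Nat.cast_sub (Finset.card_le_univ Y)]
        _ = _ := by rw [Finset.sum_const, nsmul_eq_mul]
    set E := ∑ x ∈ R, ∑ y ∈ B, c s(x, y) with hE
    have hE' : ∑ x ∈ B, ∑ y ∈ R, c s(x, y) = E := by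
      rw [hE, Finset.sum_comm]
      simp only [Sym2.eq_swap]
    have hEabs : |E| ≤ R.card * B.card := by
      calc _ ≤ ∑ x ∈ R, |∑ y ∈ B, c s(x, y)| := Finset.abs_sum_le_sum_abs _ _
        _ ≤ ∑ x ∈ R, (B.card : ℤ) := Finset.sum_le_sum fun x _ => hcsum x B
        _ = _ := by simp
    have hmain : (R.card : ℤ) * B.card * (3 * n + 1)
        ≤ 2 * (B.card * ∑ x ∈ R, d x - R.card * ∑ x ∈ B, d x) := by
      have h1 : ∑ x ∈ R, ∑ y ∈ B, (3 * n + 1) ≤ ∑ x ∈ R, ∑ y ∈ B, 2 * (d x - d y) := by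
        apply Finset.sum_le_sum
        intro x hx
        apply Finset.sum_le_sum
        intro y hy
        simp only [hR, hB, mem_filter, mem_univ, true_and] at hx hy
        have := hpq x y hx.1 hy.1 hx.2 hy.2
        linarith
      have h2 : ∑ x ∈ R, ∑ y ∈ B, 2 * (d x - d y)
          = 2 * (B.card * ∑ x ∈ R, d x - R.card * ∑ x ∈ B, d x) := by
        simp only [← Finset.mul_sum, Finset.sum_sub_distrib, Finset.sum_const, nsmul_eq_mul]
      rw [h2] at h1
      simp only [Finset.sum_const, nsmul_eq_mul] at h1
      linarith
    have hs1 := abs_le.mp (hsplit R B)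
    have hs2 := abs_le.mp (hsplit B R)
    rw [hE'] at hs2
    have hEE := abs_le.mp hEabs
    refine abs_conn_num n R.card B.card S.card E (∑ x ∈ R, d x) (∑ x ∈ B, d x) (∑ x ∈ S, d x)
      hn0 ?_ ?_ hcard ?_ hEE.2 hEE.1 htot (hbd S).1 (hbd S).2 (hbd R).1 hR2 (hbd B).2 hB2
      (by linarith [hs1.2]) (by linarith [hs2.1]) hmain
    · have := Finset.card_pos.mpr ⟨a, haR⟩
      omega
    · have := Finset.card_pos.mpr ⟨b, hbB⟩
      omega
    · rw [hn]; exact_mod_cast hS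
  rcases le_total (d b) (d a) with h | h
  · exact key a b ha hb h
  · have : Std.Symm P := ⟨hsymm⟩
    exact Std.Symm.symm _ _ (key b a hb ha h)

/-- The sign of the copy does not depend on where the vertices of `T` go. -/
def absGood {V : Type*} [Fintype V] [DecidableEq V] (F : SimpleGraph V) [DecidableRel F.Adj]
    (c : Sym2 V → ℤ) (T : Finset V) : Prop :=
  ∀ f g : Equiv.Perm V, (∀ x, x ∉ T → f x = g x) → (0 < absC F c f ↔ 0 < absC F c g)

lemma abs_move {V : Type*} [Fintype V] [DecidableEq V] (F : SimpleGraph V) [DecidableRel F.Adj]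
    (c : Sym2 V → ℤ) (k : ℕ) (hk : ∀ f, (k : ℤ) < |absC F c f|) (T : Finset V)
    (hT : absGood F c T) {u v : V} (hu : u ∉ T) (hv : v ∈ T) (f f' g : Equiv.Perm V)
    (h1 : ∀ x, x ∉ T → f' x = f x)
    (h2 : |absC F c f' - absC F c (f' * Equiv.swap u v)| ≤ 2 * k)
    (h3 : ∀ x, x ∉ insert u T → f x = g x) (h4 : g u = f' v) :
    0 < absC F c f ↔ 0 < absC F c g := by
  have e1 := hT f f' (fun x hx => (h1 x hx).symm)
  have e2 := hT (f' * Equiv.swap u v) g (by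
    intro x hx
    simp only [Equiv.Perm.coe_mul, Function.comp]
    by_cases hxu : x = u
    · subst hxu
      rw [Equiv.swap_apply_left, h4]
    · have hxv : x ≠ v := by rintro rfl; exact hx hv
      rw [Equiv.swap_apply_of_ne_of_ne hxu hxv, h1 x hx]
      exact h3 x (by simp [hxu, hx]))
  have k1 := hk f'
  have k2 := hk (f' * Equiv.swap u v)
  rw [e1, ← e2]
  generalize absC F c f' = p at *
  generalize absC F c (f' * Equiv.swap u v) = q at *
  rcases abs_cases p with h | h <;> rcases abs_cases q with h' | h' <;>
    rcases abs_cases (p - q) with h'' | h'' <;> omega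

lemma abs_low {V : Type*} [Fintype V] [DecidableEq V] (F : SimpleGraph V) [DecidableRel F.Adj]
    (c : Sym2 V → ℤ) (hc1 : ∀ e, |c e| ≤ 1)
    (k : ℕ) (hk : ∀ f, (k : ℤ) < |absC F c f|) (T : Finset V)
    (hT : absGood F c T) {u v : V} (hu : u ∉ T) (hv : v ∈ T) (hvd : F.degree v ≤ 1)
    (hud : F.degree u + 1 ≤ k) : absGood F c (insert u T) := by
  intro f g hfg
  by_cases hab : f u = g u
  · apply hT
    intro x hx
    by_cases hxu : x = u
    · rw [hxu, hab]
    · exact hfg x (by simp [hxu, hx])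
  have ht : f.symm (g u) ∈ T := by
    by_contra h
    by_cases h' : f.symm (g u) = u
    · apply hab
      rw [Equiv.symm_apply_eq] at h'
      exact h'.symm
    · have := hfg (f.symm (g u)) (by simp [h, h'])
      rw [Equiv.apply_symm_apply] at this
      exact h' (g.injective this).symm
  refine abs_move F c k hk T hT hu hv f (f * Equiv.swap v (f.symm (g u))) g ?_ ?_ hfg ?_
  · intro x hx
    simp only [Equiv.Perm.coe_mul, Function.comp]
    rw [Equiv.swap_apply_of_ne_of_ne]
    · rintro rfl; exact hx hv
    · rintro rfl; exact hx ht
  · refine (abs_swap_diff F c hc1 _ u v).trans ?_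
    generalize (f * Equiv.swap v (f.symm (g u))) = f'
    have : |∑ w ∈ (F.neighborFinset u).erase v, (c s(f' u, f' w) - c s(f' v, f' w))|
        ≤ 2 * F.degree u := by
      calc _ ≤ ∑ w ∈ (F.neighborFinset u).erase v, |c s(f' u, f' w) - c s(f' v, f' w)| :=
            Finset.abs_sum_le_sum_abs _ _
        _ ≤ ∑ w ∈ (F.neighborFinset u).erase v, 2 := by
            apply Finset.sum_le_sum
            intro w _
            have h1 := hc1 s(f' u, f' w)
            have h2 := hc1 s(f' v, f' w)
            rw [abs_le] at *
            omega
        _ ≤ ∑ w ∈ F.neighborFinset u, 2 :=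
            Finset.sum_le_sum_of_subset_of_nonneg (Finset.erase_subset _ _) (by simp)
        _ = _ := by simp [mul_comm]
    have h1 : (F.degree v : ℤ) ≤ 1 := by exact_mod_cast hvd
    have h2 : (F.degree u : ℤ) + 1 ≤ k := by exact_mod_cast hud
    linarith
  · simp

lemma abs_high1 {V : Type*} [Fintype V] [DecidableEq V] (F : SimpleGraph V) [DecidableRel F.Adj]
    (c : Sym2 V → ℤ) (hc1 : ∀ e, |c e| ≤ 1) (hpm : ∀ x y, x ≠ y → c s(x, y) = 1 ∨ c s(x, y) = -1)
    (hd : ∀ x, c s(x, x) = 0)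
    (k : ℕ) (hk3 : 3 ≤ k) (hk : ∀ f, (k : ℤ) < |absC F c f|) (T : Finset V)
    (hT : absGood F c T) {u v : V} (hu : u ∉ T) (hv : v ∈ T) (hvd : F.degree v ≤ 1)
    (huT : (F.neighborFinset u ∩ Tᶜ).card ≤ 1) (hn : 8 * (Tᶜ).card + 4 * F.degree u + 4 ≤ Fintype.card V)
    (d : V → ℤ) (hdd : d = fun x => ∑ y, c s(x, y))
    (f g : Equiv.Perm V) (hfg : ∀ x, x ∉ insert u T → f x = g x)
    (hclose : 2 * |d (f u) - d (g u)| ≤ 3 * (Fintype.card V : ℤ)) :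
    0 < absC F c f ↔ 0 < absC F c g := by
  classical
  by_cases hab : f u = g u
  · apply hT
    intro x hx
    by_cases hxu : x = u
    · rw [hxu, hab]
    · exact hfg x (by simp [hxu, hx])
  set a := f u with ha
  set b := g u with hb
  set S : Finset V := (Tᶜ.erase u).image f with hS
  have hSc : S.card + 1 = (Tᶜ).card := by
    rw [hS, Finset.card_image_of_injective _ f.injective]
    exact Finset.card_erase_add_one (by simpa using hu)
  have haS : a ∉ S := by
    simp [hS, ha]
  have hbS : b ∉ S := by
    intro h
    simp only [hS, mem_image, mem_erase, mem_compl] at h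
    obtain ⟨t, ⟨htu, htT⟩, ht⟩ := h
    rw [hfg t (by simp [htu, htT])] at ht
    exact htu (g.injective ht)
  set h : V → ℤ := fun x => c s(a, x) - c s(b, x) with hh
  have hh2 : ∀ x, |h x| ≤ 2 := by
    intro x
    have h1 := hc1 s(a, x)
    have h2 := hc1 s(b, x)
    simp only [hh]
    rw [abs_le] at *
    omega
  set A : Finset V := (insert a (insert b S))ᶜ with hA
  have hAc : A.card + S.card + 2 = Fintype.card V := by
    rw [hA, Finset.card_compl, Finset.card_insert_of_notMem (by simp [hab, haS]),
      Finset.card_insert_of_notMem hbS]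
    omega
  set W : Finset V := (F.neighborFinset u ∩ T).erase v with hW
  have hWc : W.card ≤ F.degree u := by
    rw [← SimpleGraph.card_neighborFinset_eq_degree]
    exact Finset.card_le_card ((Finset.erase_subset _ _).trans Finset.inter_subset_left)
  have hsumA : |∑ x ∈ A, h x| ≤ |d a - d b| + 2 * S.card := by
    have h1 : ∑ x, h x = d a - d b := by
      simp only [hh, hdd, Finset.sum_sub_distrib]
    have h2 : ∑ x ∈ A, h x = (d a - d b) - ∑ x ∈ S, h x := by
      rw [← h1, ← Finset.sum_add_sum_compl A h, hA, compl_compl,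
        Finset.sum_insert (by simp [hab, haS]), Finset.sum_insert hbS]
      simp only [hh, hd, Sym2.eq_swap (a := b) (b := a)]
      ring
    have h3 : |∑ x ∈ S, h x| ≤ 2 * S.card := by
      calc _ ≤ ∑ x ∈ S, |h x| := Finset.abs_sum_le_sum_abs _ _
        _ ≤ ∑ x ∈ S, 2 := Finset.sum_le_sum fun x _ => hh2 x
        _ = _ := by simp [mul_comm]
    rw [h2]
    exact (abs_sub _ _).trans (by linarith)
  obtain ⟨X, hXA, hXc, hXs⟩ := abs_subset h (A.card - W.card) A W.card (by
      intro x hx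
      simp only [hA, mem_compl, mem_insert, not_or] at hx
      have h1 := hpm a x (Ne.symm hx.1)
      have h2 := hpm b x (Ne.symm hx.2.1)
      simp only [hh]
      omega) (by omega) (by
      have : ((A.card - W.card : ℕ) : ℤ) = A.card - W.card := by
        rw [Nat.cast_sub]; omega
      rw [this]
      omega)
  let e : W ≃ X := Finset.equivOfCardEq hXc.symm
  let φ : V → V := fun x => if hx : x ∈ W then e ⟨x, hx⟩ else if x = v then b else f x
  have hvW : v ∉ W := by simp [hW]
  have hWT : ∀ x ∈ W, x ∈ T := by
    intro x hx
    simp only [hW, mem_erase, mem_inter] at hx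
    exact hx.2.2
  have φW : ∀ x (hx : x ∈ W), φ x = e ⟨x, hx⟩ := fun x hx => by simp [φ, hx]
  have φv : φ v = b := by simp [φ, hvW]
  have φT : ∀ x, x ∉ T → φ x = f x := by
    intro x hx
    have h1 : x ∉ W := fun h => hx (hWT x h)
    have h2 : x ≠ v := by rintro rfl; exact hx hv
    simp [φ, h1, h2]
  have hXn : ∀ x ∈ X, x ≠ b ∧ ∀ t, t ∉ T → f t ≠ x := by
    intro x hx
    have h1 := hXA hx
    simp only [hA, mem_compl, mem_insert, not_or] at h1
    refine ⟨h1.2.1, ?_⟩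
    intro t ht htx
    by_cases htu : t = u
    · subst htu; exact h1.1 htx.symm
    · apply h1.2.2
      rw [hS, mem_image]
      exact ⟨t, by simp [htu, ht], htx⟩
  have hbn : ∀ t, t ∉ T → f t ≠ b := by
    intro t ht htx
    by_cases htu : t = u
    · subst htu; exact hab htx
    · apply hbS
      rw [hS, mem_image]
      exact ⟨t, by simp [htu, ht], htx⟩
  have hinj : Set.InjOn φ ((W ∪ {v} ∪ Tᶜ : Finset V) : Set V) := by
    intro x hx y hy hxy
    simp only [coe_union, coe_singleton, Set.mem_union, mem_coe, Set.mem_singleton_iff,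
      mem_compl] at hx hy
    rcases hx with (hx | rfl) | hx <;> rcases hy with (hy | rfl) | hy
    · rw [φW x hx, φW y hy] at hxy
      have := e.injective (Subtype.ext hxy)
      simpa using this
    · rw [φW x hx, φv] at hxy
      exact absurd hxy (hXn _ (e ⟨x, hx⟩).2).1
    · rw [φW x hx, φT y hy] at hxy
      exact absurd hxy.symm ((hXn _ (e ⟨x, hx⟩).2).2 y hy)
    · rw [φW y hy, φv] at hxy
      exact absurd hxy.symm (hXn _ (e ⟨y, hy⟩).2).1
    · rfl
    · rw [φv, φT y hy] at hxy
      exact absurd hxy.symm (hbn y hy)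
    · rw [φT x hx, φW y hy] at hxy
      exact absurd hxy ((hXn _ (e ⟨y, hy⟩).2).2 x hx)
    · rw [φv, φT x hx] at hxy
      exact absurd hxy (hbn x hx)
    · rw [φT x hx, φT y hy] at hxy
      exact f.injective hxy
  obtain ⟨f0, hf0⟩ := Finset.exists_equiv_extend_of_card_eq (t := (univ : Finset V))
    (by simp) (Finset.subset_univ _) hinj
  let f' : Equiv.Perm V := f0.trans (Equiv.subtypeUnivEquiv (by simp))
  have hf' : ∀ x ∈ W ∪ {v} ∪ Tᶜ, f' x = φ x := fun x hx => by
    rw [← hf0 x hx]; rfl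
  have f'v : f' v = b := by rw [hf' v (by simp), φv]
  have f'T : ∀ x, x ∉ T → f' x = f x := fun x hx => by rw [hf' x (by simp [hx]), φT x hx]
  refine abs_move F c k hk T hT hu hv f f' g f'T ?_ hfg f'v.symm
  refine (abs_swap_diff F c hc1 _ u v).trans ?_
  rw [f'v, f'T u hu]
  have hsplit : ∑ w ∈ (F.neighborFinset u).erase v, (c s(f u, f' w) - c s(b, f' w))
      = ∑ w ∈ W, h (f' w) + ∑ w ∈ F.neighborFinset u ∩ Tᶜ, h (f' w) := by
    rw [← Finset.sum_union]
    · apply Finset.sum_congr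
      · ext w
        simp only [hW, mem_erase, mem_union, mem_inter, mem_compl]
        by_cases hwv : w = v
        · subst hwv; simp [hv]
        · by_cases hwT : w ∈ T <;> simp [hwv, hwT]
      · intros; rfl
    · rw [Finset.disjoint_left]
      intro x hx hx'
      simp only [mem_inter, mem_compl] at hx'
      exact hx'.2 (hWT x hx)
  have hs1 : ∑ w ∈ W, h (f' w) = ∑ x ∈ X, h x := by
    rw [← Finset.sum_coe_sort W, ← Finset.sum_coe_sort X]
    apply Fintype.sum_equiv e
    intro w
    rw [hf' w (by simp), φW w w.2]
  have hs2 : |∑ w ∈ F.neighborFinset u ∩ Tᶜ, h (f' w)| ≤ 2 := by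
    calc _ ≤ ∑ w ∈ F.neighborFinset u ∩ Tᶜ, |h (f' w)| := Finset.abs_sum_le_sum_abs _ _
      _ ≤ ∑ w ∈ F.neighborFinset u ∩ Tᶜ, 2 := Finset.sum_le_sum fun x _ => hh2 _
      _ = 2 * (F.neighborFinset u ∩ Tᶜ).card := by simp [mul_comm]
      _ ≤ 2 := by
        have : ((F.neighborFinset u ∩ Tᶜ).card : ℤ) ≤ 1 := by exact_mod_cast huT
        linarith
  rw [hsplit, hs1]
  have h1 : (F.degree v : ℤ) ≤ 1 := by exact_mod_cast hvd
  have h2 : (3 : ℤ) ≤ k := by exact_mod_cast hk3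
  have := abs_add_le (∑ x ∈ X, h x) (∑ w ∈ F.neighborFinset u ∩ Tᶜ, h (f' w))
  linarith

lemma abs_high {V : Type*} [Fintype V] [DecidableEq V] (F : SimpleGraph V) [DecidableRel F.Adj]
    (c : Sym2 V → ℤ) (hc1 : ∀ e, |c e| ≤ 1) (hpm : ∀ x y, x ≠ y → c s(x, y) = 1 ∨ c s(x, y) = -1)
    (hd : ∀ x, c s(x, x) = 0)
    (hc : ∑ e ∈ (⊤ : SimpleGraph V).edgeFinset, c e = 0)
    (k : ℕ) (hk3 : 3 ≤ k) (hk : ∀ f, (k : ℤ) < |absC F c f|) (T : Finset V)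
    (hT : absGood F c T) {u v : V} (hu : u ∉ T) (hv : v ∈ T) (hvd : F.degree v ≤ 1)
    (huT : (F.neighborFinset u ∩ Tᶜ).card ≤ 1)
    (hn : 8 * (Tᶜ).card + 4 * F.degree u + 4 ≤ Fintype.card V)
    (hn' : 12 * (Tᶜ).card ≤ Fintype.card V) : absGood F c (insert u T) := by
  intro f g hfg
  obtain ⟨d, hdd⟩ : ∃ d : V → ℤ, d = fun x => ∑ y, c s(x, y) := ⟨_, rfl⟩
  set S : Finset V := (Tᶜ.erase u).image f with hS
  have hSc : S.card ≤ (Tᶜ).card :=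
    Finset.card_image_le.trans (Finset.card_le_card (Finset.erase_subset _ _))
  have haS : f u ∉ S := by simp [hS]
  have hbS : g u ∉ S := by
    intro h
    simp only [hS, mem_image, mem_erase, mem_compl] at h
    obtain ⟨t, ⟨htu, htT⟩, ht⟩ := h
    rw [hfg t (by simp [htu, htT])] at ht
    exact htu (g.injective ht)
  have hpath := abs_conn c hc1 hd hc S (by omega) (f u) (g u) haS hbS d hdd
  -- a permutation agreeing with `f` off `insert u T` that sends `u` to `m`
  have hex : ∀ m, m ∉ S → ∃ h : Equiv.Perm V, (∀ x, x ∉ insert u T → f x = h x) ∧ h u = m := by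
    intro m hm
    refine ⟨f * Equiv.swap u (f.symm m), ?_, by simp⟩
    intro x hx
    simp only [mem_insert, not_or] at hx
    simp only [Equiv.Perm.coe_mul, Function.comp]
    rw [Equiv.swap_apply_of_ne_of_ne hx.1]
    rintro rfl
    apply hm
    rw [hS, mem_image]
    exact ⟨f.symm m, by simp [hx.1, hx.2], by simp⟩
  have main : ∀ m, Relation.ReflTransGen
      (fun x y => x ∉ S ∧ y ∉ S ∧ 2 * |d x - d y| ≤ 3 * (Fintype.card V : ℤ)) (f u) m →
      ∀ h : Equiv.Perm V, (∀ x, x ∉ insert u T → f x = h x) → h u = m →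
      (0 < absC F c f ↔ 0 < absC F c h) := by
    intro m hm
    induction hm with
    | refl =>
      intro h hh hhu
      apply hT
      intro x hx
      by_cases hxu : x = u
      · rw [hxu, hhu]
      · exact hh x (by simp [hxu, hx])
    | tail hab hbc ih =>
      rename_i p q
      intro h hh hhu
      obtain ⟨h', hh', hh'u⟩ := hex p hbc.1
      rw [ih h' hh' hh'u]
      apply abs_high1 F c hc1 hpm hd k hk3 hk T hT hu hv hvd huT hn d hdd h' h
      · intro x hx
        rw [← hh' x hx, hh x hx]
      · rw [hh'u, hhu]
        exact hbc.2.2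
  exact main _ hpath g hfg rfl

lemma abs_core {V : Type*} [Fintype V] [DecidableEq V] [Nonempty V] (F : SimpleGraph V)
    [DecidableRel F.Adj] (hF : F.IsAcyclic)
    (c : Sym2 V → ℤ) (hpm : ∀ x y, x ≠ y → c s(x, y) = 1 ∨ c s(x, y) = -1)
    (hd : ∀ x, c s(x, x) = 0)
    (hc : ∑ e ∈ (⊤ : SimpleGraph V).edgeFinset, c e = 0)
    (k Δ : ℕ) (hk3 : 3 ≤ k) (hΔ : ∀ u, F.degree u ≤ Δ)
    (hn : ∀ s : ℕ, s * k ≤ Fintype.card V + s →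
      8 * s + 4 * Δ + 4 ≤ Fintype.card V ∧ 12 * s ≤ Fintype.card V) :
    ∃ f, |absC F c f| ≤ (k : ℤ) := by
  classical
  by_contra hcon
  push Not at hcon
  have hc1 : ∀ e, |c e| ≤ 1 := by
    intro e
    induction e using Sym2.inductionOn with
    | hf x y =>
      by_cases hxy : x = y
      · subst hxy; simp [hd]
      · rcases hpm x y hxy with h | h <;> simp [h]
  obtain ⟨v, -, hv⟩ := abs_leaf F hF univ univ_nonempty
  rw [inter_univ, SimpleGraph.card_neighborFinset_eq_degree] at hv
  set L : Finset V := univ.filter (fun x => F.degree x + 1 ≤ k) with hL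
  have hvL : v ∈ L := by simp [hL]; omega
  -- phase one
  have p0 : absGood F c {v} := by
    intro f g hfg
    have : f = g := by
      ext x
      by_cases hx : x = v
      · subst hx
        by_contra hne
        have h1 : f (f.symm (g x)) = g (f.symm (g x)) := by
          apply hfg
          simp only [mem_singleton, Equiv.symm_apply_eq]
          exact fun h => hne h.symm
        rw [Equiv.apply_symm_apply] at h1
        have h2 := g.injective h1
        rw [eq_comm, Equiv.symm_apply_eq] at h2
        exact hne h2.symm
      · exact hfg x (by simpa using hx)
    rw [this]
  have p1 : ∀ M : Finset V, M ⊆ L → absGood F c (insert v M) := by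
    intro M
    induction M using Finset.induction with
    | empty => intro _; simpa using p0
    | insert u M hu ih =>
      intro hM
      have h1 := ih ((Finset.subset_insert _ _).trans hM)
      rw [Finset.insert_comm]
      by_cases h : u ∈ insert v M
      · rwa [Finset.insert_eq_of_mem h]
      · have huL := hM (Finset.mem_insert_self u M)
        simp only [hL, mem_filter] at huL
        exact abs_low F c hc1 k hcon _ h1 h (Finset.mem_insert_self _ _) hv huL.2
  have p2 : absGood F c L := by
    have := p1 L Subset.rfl
    rwa [Finset.insert_eq_of_mem hvL] at this
  have hLc : (Lᶜ).card * k ≤ Fintype.card V + (Lᶜ).card := by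
    refine le_trans ?_ (abs_degSum F hF Lᶜ)
    rw [← smul_eq_mul]
    apply Finset.card_nsmul_le_sum
    intro x hx
    simp [hL] at hx
    omega
  obtain ⟨hn1, hn2⟩ := hn _ hLc
  have p3 : ∀ j : ℕ, ∀ T : Finset V, (Tᶜ).card = j → L ⊆ T → absGood F c T →
      absGood F c univ := by
    intro j
    induction j with
    | zero =>
      intro T hT _ hg
      have : T = univ := by
        rw [Finset.card_eq_zero, Finset.compl_eq_empty_iff] at hT
        exact hT
      rwa [this] at hg
    | succ j ih =>
      intro T hT hLT hg
      obtain ⟨u, hu, hu1⟩ := abs_leaf F hF Tᶜ (by rw [← Finset.card_pos]; omega)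
      have huT : u ∉ T := by simpa using hu
      have hle : (Tᶜ).card ≤ (Lᶜ).card := Finset.card_le_card (Finset.compl_subset_compl.mpr hLT)
      have := hΔ u
      apply ih (insert u T)
      · rw [Finset.compl_insert, Finset.card_erase_of_mem hu]; omega
      · exact hLT.trans (Finset.subset_insert _ _)
      · exact abs_high F c hc1 hpm hd hc k hk3 hcon T hg huT (hLT hvL) hv hu1 (by omega) (by omega)
  have p4 := p3 _ L rfl Subset.rfl p2
  have havg := abs_avg F c hc
  by_cases hpos : 0 < absC F c 1
  · have : 0 < ∑ f : Equiv.Perm V, absC F c f := by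
      apply Finset.sum_pos
      · intro f _
        exact (p4 1 f (by simp)).mp hpos
      · exact univ_nonempty
    omega
  · have : 0 < ∑ f : Equiv.Perm V, -absC F c f := by
      apply Finset.sum_pos
      · intro f _
        have h1 := (p4 1 f (by simp)).not.mp hpos
        have h2 := hcon f
        rcases abs_cases (absC F c f) with h | h <;> omega
      · exact univ_nonempty
    rw [Finset.sum_neg_distrib] at this
    omega


/-- For constants `η ∈ (0, 1/4)` and `δ > 0`, there exists `n₀` such
that for every `n ≥ n₀`, every forest `F` on `n` vertices with maximum degree `Δ`
satisfying `15 ≤ Δ ≤ (1/4 - η)n`, and every balanced `±1`-colouring `c` of the edges of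
`K_n`, there is a copy `F'` of `F` in `K_n` with `|c(F')| ≤ (1 + δ) * (4/η)`. -/
theorem almost_balanced_spanning_forest_const_bound
    (η δ : ℝ) (hη₁ : 0 < η) (hη₂ : η < 1 / 4) (hδ : 0 < δ) :
    ∃ n₀ : ℕ, ∀ n : ℕ, n₀ ≤ n →
      ∀ (F : SimpleGraph (Fin n)) [DecidableRel F.Adj],
        F.IsAcyclic →
        ∀ Δ : ℕ, F.maxDegree = Δ → 15 ≤ Δ → (Δ : ℝ) ≤ (1 / 4 - η) * n →
          ∀ c : Sym2 (Fin n) → ℤ,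
            (∀ e ∈ (⊤ : SimpleGraph (Fin n)).edgeFinset, c e = 1 ∨ c e = -1) →
            (∑ e ∈ (⊤ : SimpleGraph (Fin n)).edgeFinset, c e = 0) →
            ∃ f : Fin n ↪ Fin n,
              |(∑ e ∈ F.edgeFinset, c (Sym2.map (⇑f) e) : ℝ)| ≤ (1 + δ) * (4 / η) := by
  classical
  refine ⟨⌈4 / η⌉₊ + 1, ?_⟩
  intro n hn F _ hF Δ hΔ _ hΔn c hc hc0
  have hη4 : 4 / η ≤ n := by
    have h1 : (4 / η : ℝ) ≤ (⌈4 / η⌉₊ : ℝ) := Nat.le_ceil _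
    have h2 : ((⌈4 / η⌉₊ + 1 : ℕ) : ℝ) ≤ n := by exact_mod_cast hn
    push_cast at h2
    linarith
  have hηn : 4 ≤ η * n := by
    rw [div_le_iff₀ hη₁] at hη4
    linarith
  have hne : Nonempty (Fin n) := ⟨⟨0, by omega⟩⟩
  set K : ℝ := (1 + δ) * (4 / η) with hK
  have h4η : 0 < 4 / η := by positivity
  have hKη : 4 / η ≤ K := by
    rw [hK]; nlinarith
  have h16 : (16 : ℝ) ≤ 4 / η := by
    rw [le_div_iff₀ hη₁]; linarith
  set k : ℕ := ⌊K⌋₊ with hk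
  have hk16 : 16 ≤ k := Nat.le_floor (by push_cast; linarith)
  have hkK : (k : ℝ) ≤ K := Nat.floor_le (by linarith)
  have hkK' : K < k + 1 := Nat.lt_floor_add_one K
  have hkη : 4 - η ≤ k * η := by
    have h1 : 4 / η ≤ k + 1 := by linarith
    rw [div_le_iff₀ hη₁] at h1
    linarith
  set c' : Sym2 (Fin n) → ℤ := fun e => if e.IsDiag then 0 else c e with hc'
  have hcc : ∀ e : Sym2 (Fin n), ¬ e.IsDiag → c' e = c e := fun e he => by simp [hc', he]
  obtain ⟨f, hf⟩ := abs_core F hF c'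
    (by
      intro x y hxy
      rw [hcc _ (by simpa using hxy)]
      exact hc _ (by simpa using hxy))
    (by intro x; simp [hc'])
    (by
      rw [← hc0]
      apply Finset.sum_congr rfl
      intro e he
      exact hcc e (SimpleGraph.not_isDiag_of_mem_edgeFinset he))
    k Δ (by omega) (fun u => hΔ ▸ F.degree_le_maxDegree u)
    (by
      intro s hs
      rw [Fintype.card_fin] at *
      have hsR : (s : ℝ) * k ≤ n + s := by exact_mod_cast hs
      have hs0 : (0 : ℝ) ≤ s := Nat.cast_nonneg s
      have h1 : (s : ℝ) * (4 - η) ≤ s * (k * η) := mul_le_mul_of_nonneg_left hkη hs0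
      have h2 : (s : ℝ) * k * η ≤ (n + s) * η := mul_le_mul_of_nonneg_right hsR hη₁.le
      have h3 : (s : ℝ) * η ≤ s * (1 / 4) := mul_le_mul_of_nonneg_left hη₂.le hs0
      constructor
      · have : (8 * s + 4 * Δ + 4 : ℝ) ≤ n := by linarith
        exact_mod_cast this
      · have : s * 16 ≤ s * k := Nat.mul_le_mul_left s hk16
        omega)
  refine ⟨f.toEmbedding, ?_⟩
  have hsum : ∑ e ∈ F.edgeFinset, c (Sym2.map f e) = absC F c' f := by
    unfold absC
    apply Finset.sum_congr rfl
    intro e he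
    rw [hcc]
    have := SimpleGraph.not_isDiag_of_mem_edgeFinset he
    rwa [Sym2.isDiag_map f.injective]
  have hR : |((∑ e ∈ F.edgeFinset, c (Sym2.map f e) : ℤ) : ℝ)| ≤ k := by
    rw [hsum]; exact_mod_cast hf
  push_cast at hR
  exact hR.trans hkK
end

section
/- Let n be an integer and let c : E(K_n) → {−1, +1} be a balanced colouring. Let H be a graph on n vertices with minimum degree δ_H. Suppose h_B and h_R are two injective graph embeddings of H into K_n with images H_B and H_R respectively, such that c(H_B) ≤ 0 ≤ c(H_R). Let I = { v ∈ V(H) : h_B(v) ≠ h_R(v) } and let Δ_I = max{ deg_H(v) : v ∈ I }. Then there exists a subgraph H' of K_n isomorphic to H such that |c(H')| ≤ Δ_I + δ_H. -/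
theorem interp_step {n : ℕ} (c : Sym2 (Fin n) → ℤ)
    (hc : ∀ e ∈ (⊤ : SimpleGraph (Fin n)).edgeFinset, c e = 1 ∨ c e = -1)
    (H : SimpleGraph (Fin n)) [DecidableRel H.Adj] (f : Equiv.Perm (Fin n)) (u w : Fin n) :
    |∑ e ∈ H.edgeFinset, c (Sym2.map (⇑(f * Equiv.swap u w)) e)
      - ∑ e ∈ H.edgeFinset, c (Sym2.map (⇑f) e)| ≤ 2 * ((H.degree u : ℤ) + H.degree w) := by
  have hd : ∀ v : Fin n, (2 * (H.degree v : ℤ)) = ∑ e ∈ H.edgeFinset, if v ∈ e then 2 else 0 := by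
    intro v
    rw [← Finset.sum_filter, Finset.sum_const, ← H.card_incidenceFinset_eq_degree,
      H.incidenceFinset_eq_filter]
    simp [mul_comm]
  have hb : ∀ g : Equiv.Perm (Fin n), ∀ e ∈ H.edgeFinset,
      c (Sym2.map g e) = 1 ∨ c (Sym2.map g e) = -1 := by
    intro g e he
    apply hc
    induction e with
    | _ a b =>
      rw [SimpleGraph.mem_edgeFinset, SimpleGraph.mem_edgeSet] at he
      simp [he.ne]
  rw [mul_add, hd, hd, ← Finset.sum_sub_distrib, ← Finset.sum_add_distrib]
  refine (Finset.abs_sum_le_sum_abs _ _).trans (Finset.sum_le_sum fun e he => ?_)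
  by_cases h : u ∈ e ∨ w ∈ e
  · have h1 : |c (Sym2.map (⇑(f * Equiv.swap u w)) e) - c (Sym2.map (⇑f) e)| ≤ 2 := by
      rcases hb f e he with h | h <;> rcases hb (f * Equiv.swap u w) e he with h' | h' <;>
        rw [h, h'] <;> norm_num
    refine h1.trans ?_
    split_ifs <;> simp_all
  · push Not at h
    have : Sym2.map (⇑(f * Equiv.swap u w)) e = Sym2.map (⇑f) e := by
      apply Sym2.map_congr
      intro x hx
      have hxu : x ≠ u := fun h' => h.1 (h' ▸ hx)
      have hxw : x ≠ w := fun h' => h.2 (h' ▸ hx)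
      simp [Equiv.swap_apply_of_ne_of_ne hxu hxw]
    rw [this]; simp [h.1, h.2]


/-- interpolation lemma. Let `c` be a balanced `±1`-colouring of the
edges of `K_n`, let `H` be a graph on `n` vertices with minimum degree `δ_H`, and let
`h_B, h_R` be two embeddings of `H` into `K_n` whose images `H_B, H_R` satisfy
`c(H_B) ≤ 0 ≤ c(H_R)`. With `I = {v : h_B v ≠ h_R v}` and `Δ_I = max{deg_H v : v ∈ I}`,
there is a copy `H'` of `H` in `K_n` with `|c(H')| ≤ Δ_I + δ_H`. -/
theorem interpolation_lemma
    (n : ℕ) (c : Sym2 (Fin n) → ℤ)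
    (hc : ∀ e ∈ (⊤ : SimpleGraph (Fin n)).edgeFinset, c e = 1 ∨ c e = -1)
    (hbal : ∑ e ∈ (⊤ : SimpleGraph (Fin n)).edgeFinset, c e = 0)
    (H : SimpleGraph (Fin n)) [DecidableRel H.Adj]
    (hB hR : Fin n ↪ Fin n)
    (hBneg : ∑ e ∈ H.edgeFinset, c (Sym2.map (⇑hB) e) ≤ 0)
    (hRpos : 0 ≤ ∑ e ∈ H.edgeFinset, c (Sym2.map (⇑hR) e))
    (ΔI : ℕ)
    (hΔI : ΔI = (Finset.univ.filter fun v : Fin n => hB v ≠ hR v).sup fun v => H.degree v) :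
    ∃ f : Fin n ↪ Fin n,
      |∑ e ∈ H.edgeFinset, c (Sym2.map (⇑f) e)| ≤ (ΔI : ℤ) + H.minDegree := by
  by_contra hcon
  push Not at hcon
  rcases Nat.eq_zero_or_pos n with hn | hn
  · subst hn
    have := hcon hB
    have h0 : H.edgeFinset = ∅ := by
      ext e
      induction e with
      | _ a b => exact a.elim0
    rw [h0] at this
    simp at this
    omega
  haveI : Nonempty (Fin n) := ⟨⟨0, hn⟩⟩
  obtain ⟨w, hw⟩ := H.exists_minimal_degree_vertex
  set S : Equiv.Perm (Fin n) → ℤ := fun f => ∑ e ∈ H.edgeFinset, c (Sym2.map (⇑f) e) with hS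
  have hlarge : ∀ f, (ΔI : ℤ) + H.minDegree < |S f| := fun f => hcon f.toEmbedding
  have hstep : ∀ i, hB i ≠ hR i → ∀ f, S f < 0 → S (f * Equiv.swap w i) < 0 := by
    intro i hi f hf
    have hdi : H.degree i ≤ ΔI := by
      rw [hΔI]
      exact Finset.le_sup (f := fun v => H.degree v) (by simpa using hi)
    have h1 := interp_step c hc H f w i
    change |S _ - S f| ≤ _ at h1
    have h2 := hlarge f
    have h3 := hlarge (f * Equiv.swap w i)
    rw [abs_of_neg hf] at h2
    by_contra h4
    push Not at h4
    rw [abs_of_nonneg h4] at h3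
    have := (abs_le.1 h1).2
    rw [hw] at h2 h3
    have : (H.degree i : ℤ) ≤ ΔI := by exact_mod_cast hdi
    linarith
  have hstep2 : ∀ i j, hB i ≠ hR i → hB j ≠ hR j → ∀ f, S f < 0 → S (f * Equiv.swap i j) < 0 := by
    intro i j hi hj f hf
    by_cases hij : i = j
    · subst hij; rw [Equiv.swap_self]; exact hf
    by_cases hjw : j = w
    · subst hjw; rw [Equiv.swap_comm]; exact hstep i hi f hf
    by_cases hiw : i = w
    · subst hiw; exact hstep j hj f hf
    have : Equiv.swap i j = Equiv.swap w i * Equiv.swap w j * Equiv.swap w i := by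
      rw [Equiv.swap_comm w i, Equiv.swap_comm w j, Equiv.swap_comm i w, Equiv.swap_comm j w,
        Equiv.swap_comm w i, Equiv.swap_comm i j]
      ext x
      simp only [Equiv.Perm.mul_apply, Equiv.swap_apply_def]
      grind
    rw [this, ← mul_assoc, ← mul_assoc]
    exact hstep i hi _ (hstep j hj _ (hstep i hi _ hf))
  let fB : Equiv.Perm (Fin n) := Equiv.ofBijective hB (Finite.injective_iff_bijective.1 hB.injective)
  let fR : Equiv.Perm (Fin n) := Equiv.ofBijective hR (Finite.injective_iff_bijective.1 hR.injective)
  have hall : ∀ τ : Equiv.Perm {v // hB v ≠ hR v}, ∀ f, S f < 0 →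
      S (f * Equiv.Perm.ofSubtype τ) < 0 := by
    intro τ
    induction τ using Equiv.Perm.swap_induction_on with
    | one => simp
    | swap_mul τ x y hxy ih =>
      intro f hf
      rw [map_mul, Equiv.Perm.ofSubtype_swap_eq, ← mul_assoc]
      exact ih _ (hstep2 x y x.2 y.2 f hf)
  have hmove : ∀ x, (fB⁻¹ * fR) x ≠ x → hB x ≠ hR x := by
    intro x hx h
    apply hx
    rw [Equiv.Perm.mul_apply, Equiv.Perm.inv_eq_iff_eq]
    exact h.symm
  have hpres : ∀ x, hB ((fB⁻¹ * fR) x) ≠ hR ((fB⁻¹ * fR) x) ↔ hB x ≠ hR x := by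
    intro x
    have e1 : hB ((fB⁻¹ * fR) x) = hR x := by
      change fB (fB⁻¹ (fR x)) = fR x
      simp
    rw [e1]
    have e2 : hR x = hR ((fB⁻¹ * fR) x) ↔ hR x = hB x := by
      rw [hR.injective.eq_iff, ← hB.injective.eq_iff, e1, eq_comm]
    rw [Ne, e2, eq_comm]
  have hBlt : S fB < 0 := by
    have h := hlarge fB
    have h' : S fB ≤ 0 := hBneg
    rcases h'.lt_or_eq with h' | h'
    · exact h'
    · rw [h'] at h; simp at h; omega
  have hfin := hall ((fB⁻¹ * fR).subtypePerm hpres) fB hBlt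
  rw [Equiv.Perm.ofSubtype_subtypePerm hpres hmove, mul_inv_cancel_left] at hfin
  have : 0 ≤ S fR := hRpos
  omega
end

section
/- Let n ≥ 5 be an integer and let ε be a real number with 1/n ≤ ε < 1/4. Then in any balanced 2-colouring of the edges of K_n by red and blue, there are at least εn + 1 vertices which are (1/4 − ε)n-balanced. -/
open Classical in
lemma edge_bound {n : ℕ} (G : SimpleGraph (Fin n)) (A : Finset (Fin n)) :
    G.edgeFinset.card ≤ ∑ v ∈ A, G.degree v + (Aᶜ).card.choose 2 := by
  have hsub : G.edgeFinset ⊆ (A.biUnion fun v => G.incidenceFinset v) ∪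
      (Aᶜ).offDiag.image (fun p => s(p.1, p.2)) := by
    intro e
    induction e using Sym2.ind with
    | _ x y =>
      intro h
      have hxy : G.Adj x y := by simpa using h
      simp only [Finset.mem_union, Finset.mem_biUnion, Finset.mem_image, Finset.mem_offDiag,
        Finset.mem_compl]
      by_cases hx : x ∈ A
      · left
        exact ⟨x, hx, by simp [SimpleGraph.mk'_mem_incidenceSet_iff, hxy]⟩
      by_cases hy : y ∈ A
      · left
        exact ⟨y, hy, by simp [SimpleGraph.mk'_mem_incidenceSet_iff, hxy]⟩
      · right
        exact ⟨(x, y), ⟨hx, hy, hxy.ne⟩, rfl⟩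
  refine (Finset.card_le_card hsub).trans ((Finset.card_union_le _ _).trans ?_)
  refine add_le_add ?_ ?_
  · refine Finset.card_biUnion_le.trans (le_of_eq ?_)
    exact Finset.sum_congr rfl fun v _ => by simp
  · exact le_of_eq (Sym2.card_image_offDiag _)

open Classical in
lemma small_class {n : ℕ} (e : ℝ) (he1 : 1 ≤ e) (he2 : 4 * e < n)
    (G : SimpleGraph (Fin n)) (hE : 4 * (G.edgeFinset.card : ℝ) = n * (n - 1))
    (A : Finset (Fin n)) (hA : ∀ v ∈ A, (G.degree v : ℝ) < n / 4 - e) :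
    2 * (A.card : ℝ) ≤ n - e - 1 := by
  by_contra! hlt
  have hpos : 0 < A.card := by
    have : (0 : ℝ) < A.card := by linarith
    exact_mod_cast this
  have hb := edge_bound G A
  have hb' : (G.edgeFinset.card : ℝ) ≤ ∑ v ∈ A, (G.degree v : ℝ) + ((Aᶜ).card.choose 2 : ℕ) := by
    exact_mod_cast hb
  have hs : ∑ v ∈ A, (G.degree v : ℝ) < A.card * (n / 4 - e) := by
    rw [← nsmul_eq_mul, ← Finset.sum_const]
    exact Finset.sum_lt_sum_of_nonempty (Finset.card_pos.mp hpos) hA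
  have hle : A.card ≤ n := by simpa using Finset.card_le_univ A
  have hc : ((Aᶜ).card : ℝ) = n - A.card := by
    rw [Finset.card_compl, Fintype.card_fin, Nat.cast_sub hle]
  rw [Nat.cast_choose_two, hc] at hb'
  have hle' : (A.card : ℝ) ≤ n := by exact_mod_cast hle
  generalize (A.card : ℝ) = a at *
  generalize (n : ℝ) = m at *
  -- with L = (m-e-1)/2, convexity on [L, m]
  have key : m * (m - 1) < 4 * (a * (m / 4 - e)) + 2 * ((m - a) * (m - a - 1)) := by
    linarith
  have h1 : 0 ≤ (m - a) * (2 * a - (m - e - 1)) := mul_nonneg (by linarith) (by linarith)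
  -- value = chord - (convex part)
  have h2 : 0 ≤ (m - a) * (m * (3 * e - 1) - 5 * e ^ 2 - 4 * e + 1) := by
    refine mul_nonneg (by linarith) ?_
    nlinarith [mul_nonneg (sub_nonneg.2 he2.le) (by linarith : (0:ℝ) ≤ 3 * e - 1),
      mul_nonneg (by linarith : (0:ℝ) ≤ 7 * e - 1) (sub_nonneg.2 he1)]
  have h3 : 0 ≤ (2 * a - (m - e - 1)) * (m * (e - 1)) :=
    mul_nonneg (by linarith) (mul_nonneg (by linarith) (by linarith))
  have h4 : 0 < m + e + 1 := by linarith
  have h5 : 0 ≤ (m + e + 1) * ((m - a) * (2 * a - (m - e - 1))) := mul_nonneg h4.le h1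
  have h6 := mul_lt_mul_of_pos_left key h4
  nlinarith [h2, h3, h5, h6]

open Classical in
lemma colour_class {n : ℕ} (e : ℝ) (he1 : 1 ≤ e) (he2 : 4 * e < n)
    (c : Sym2 (Fin n) → ℤ) (k : ℤ)
    (hE : 4 * (((⊤ : SimpleGraph (Fin n)).edgeFinset.filter fun e => c e = k).card : ℝ)
      = n * (n - 1)) :
    2 * ((Finset.univ.filter fun v : Fin n =>
      ((Finset.univ.filter fun w => w ≠ v ∧ c s(v, w) = k).card : ℝ) < n / 4 - e).card : ℝ)
      ≤ n - e - 1 := by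
  let G : SimpleGraph (Fin n) :=
    { Adj := fun v w => w ≠ v ∧ c s(v, w) = k
      symm := ⟨fun v w h => ⟨h.1.symm, by rw [Sym2.eq_swap]; exact h.2⟩⟩
      loopless := ⟨fun v h => h.1 rfl⟩ }
  have hG : G.edgeFinset = (⊤ : SimpleGraph (Fin n)).edgeFinset.filter fun e => c e = k := by
    ext e
    induction e using Sym2.ind with
    | _ x y => simp [G, eq_comm]
  refine small_class e he1 he2 G ?_ _ ?_
  · rw [← hE]
    congr 3
    convert hG
  · intro v hv
    rw [Finset.mem_filter] at hv
    convert hv.2 using 2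
    rw [← SimpleGraph.card_neighborFinset_eq_degree]
    congr 1
    ext w
    simp [G]


/-- Let `n ≥ 5` and `1/n ≤ ε < 1/4`. In any balanced red/blue
colouring of the edges of `K_n` (red = `+1`, blue = `-1`), there are at least `εn + 1`
vertices which are `(1/4 - ε)n`-balanced, i.e. incident to at least `(1/4 - ε)n` red
edges and at least `(1/4 - ε)n` blue edges. -/
theorem many_balanced_vertices
    (n : ℕ) (hn : 5 ≤ n) (ε : ℝ) (hε₁ : 1 / (n : ℝ) ≤ ε) (hε₂ : ε < 1 / 4)
    (c : Sym2 (Fin n) → ℤ)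
    (hc : ∀ e ∈ (⊤ : SimpleGraph (Fin n)).edgeFinset, c e = 1 ∨ c e = -1)
    (hbal : ((⊤ : SimpleGraph (Fin n)).edgeFinset.filter fun e => c e = 1).card =
            ((⊤ : SimpleGraph (Fin n)).edgeFinset.filter fun e => c e = -1).card) :
    ε * n + 1 ≤
      ((Finset.univ.filter fun v : Fin n =>
          (1 / 4 - ε) * n ≤ ((Finset.univ.filter fun w => w ≠ v ∧ c s(v, w) = 1).card : ℝ) ∧
          (1 / 4 - ε) * n ≤ ((Finset.univ.filter fun w => w ≠ v ∧ c s(v, w) = -1).card : ℝ)).card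
        : ℝ) := by
  have hn0 : (0 : ℝ) < n := by
    have : 0 < n := by omega
    exact_mod_cast this
  have he1 : 1 ≤ ε * n := by rwa [div_le_iff₀ hn0] at hε₁
  have he2 : 4 * (ε * n) < n := by nlinarith
  have htot : ((⊤ : SimpleGraph (Fin n)).edgeFinset.filter fun e => c e = 1).card +
      ((⊤ : SimpleGraph (Fin n)).edgeFinset.filter fun e => c e = -1).card = n.choose 2 := by
    have h1 : ((⊤ : SimpleGraph (Fin n)).edgeFinset.filter fun e => c e = -1) =
        ((⊤ : SimpleGraph (Fin n)).edgeFinset.filter fun e => ¬ c e = 1) := by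
      refine Finset.filter_congr fun e he => ?_
      rcases hc e he with h | h <;> simp [h]
    rw [h1, Finset.card_filter_add_card_filter_not, SimpleGraph.card_edgeFinset_top_eq_card_choose_two,
      Fintype.card_fin]
  have htot' : (((⊤ : SimpleGraph (Fin n)).edgeFinset.filter fun e => c e = 1).card : ℝ) +
      ((⊤ : SimpleGraph (Fin n)).edgeFinset.filter fun e => c e = -1).card =
      n * (n - 1) / 2 := by
    rw [← Nat.cast_choose_two]; exact_mod_cast htot
  have hbal' : (((⊤ : SimpleGraph (Fin n)).edgeFinset.filter fun e => c e = 1).card : ℝ) =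
      ((⊤ : SimpleGraph (Fin n)).edgeFinset.filter fun e => c e = -1).card := by
    exact_mod_cast hbal
  have hR := colour_class (ε * n) he1 he2 c 1 (by linarith)
  have hB := colour_class (ε * n) he1 he2 c (-1) (by linarith)
  have hcov : (Finset.univ : Finset (Fin n)) ⊆
      ((Finset.univ.filter fun v : Fin n =>
          (1 / 4 - ε) * n ≤ ((Finset.univ.filter fun w => w ≠ v ∧ c s(v, w) = 1).card : ℝ) ∧
          (1 / 4 - ε) * n ≤ ((Finset.univ.filter fun w => w ≠ v ∧ c s(v, w) = -1).card : ℝ)) ∪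
      (Finset.univ.filter fun v : Fin n =>
      ((Finset.univ.filter fun w => w ≠ v ∧ c s(v, w) = 1).card : ℝ) < n / 4 - ε * n)) ∪
      (Finset.univ.filter fun v : Fin n =>
      ((Finset.univ.filter fun w => w ≠ v ∧ c s(v, w) = -1).card : ℝ) < n / 4 - ε * n) := by
    intro v _
    have ht : (1 / 4 - ε) * n = n / 4 - ε * n := by ring
    simp only [Finset.mem_union, Finset.mem_filter, Finset.mem_univ, true_and, ht]
    by_contra! h
    exact absurd (h.1.1 h.1.2) (not_lt.2 h.2)
  have hcard := (Finset.card_le_card hcov).trans ((Finset.card_union_le _ _).trans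
    (Nat.add_le_add_right (Finset.card_union_le _ _) _))
  rw [Finset.card_univ, Fintype.card_fin] at hcard
  have hcard' := (Nat.cast_le (α := ℝ)).2 hcard
  push_cast at hcard'
  linarith
end

section
/- Let n ≥ 32 be an integer, let c : E(K_n) → {−1, +1} be a balanced colouring of the edges of K_n, and let F be a forest on n vertices with maximum degree Δ ≤ n/2. Let ε be a real number with 1/n ≤ ε ≤ 1/8. Then there exists a copy F' of F in K_n such that |c(F')| ≤ max( 1 + 2/ε , 2 + max(Δ − (1/4 − 2ε)n, 0) ). -/
open Finset in
theorem acyc_card {V : Type} [Fintype V] [Nonempty V] (G : SimpleGraph V) [DecidableRel G.Adj]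
    (h : G.IsAcyclic) : #G.edgeFinset + 1 ≤ Fintype.card V := by
  classical
  obtain ⟨T, hGT, -, hT⟩ := (SimpleGraph.connected_top (V := V)).exists_isTree_le_of_le_of_isAcyclic
    (le_top : G ≤ ⊤) h
  have := hT.card_edgeFinset
  have h2 : #G.edgeFinset ≤ #T.edgeFinset := card_le_card (by simpa using hGT)
  omega

open Finset in
theorem acyc_sum_deg {V : Type} [Fintype V] [Nonempty V] (G : SimpleGraph V) [DecidableRel G.Adj]
    (h : G.IsAcyclic) : ∑ v, G.degree v + 2 ≤ 2 * Fintype.card V := by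
  classical
  have := acyc_card G h
  rw [G.sum_degrees_eq_twice_card_edges]
  omega

open Finset in
theorem acyc_leaf {V : Type} [Fintype V] [Nonempty V] (G : SimpleGraph V) [DecidableRel G.Adj]
    (h : G.IsAcyclic) : ∃ v, G.degree v ≤ 1 := by
  by_contra hc
  push Not at hc
  have h1 := acyc_sum_deg G h
  have h2 : ∑ v : V, 2 ≤ ∑ v, G.degree v := sum_le_sum fun v _ => hc v
  simp at h2
  omega

open Finset in
theorem acyc_leaf_on {V : Type} [Fintype V] [DecidableEq V] (G : SimpleGraph V)
    [DecidableRel G.Adj] (h : G.IsAcyclic) (P : Finset V) (hP : P.Nonempty) :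
    ∃ v ∈ P, #(G.neighborFinset v ∩ P) ≤ 1 := by
  have : Nonempty (P : Set V) := hP.to_subtype
  obtain ⟨v, hv⟩ := acyc_leaf (G.induce (P : Set V)) (h.induce _)
  refine ⟨v, v.2, le_trans ?_ hv⟩
  rw [← SimpleGraph.card_neighborFinset_eq_degree]
  have : G.neighborFinset v ∩ P ⊆
      ((G.induce (P : Set V)).neighborFinset v).image Subtype.val := by
    intro w hw
    simp only [mem_inter, SimpleGraph.mem_neighborFinset] at hw
    simp [hw.1, hw.2]
  exact (card_le_card this).trans card_image_le

open Finset in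
theorem dsum {n : ℕ} (c : Sym2 (Fin n) → ℤ) :
    ∑ x : Fin n, ∑ y ∈ univ.erase x, c s(x, y)
      = 2 * ∑ e ∈ (⊤ : SimpleGraph (Fin n)).edgeFinset, c e := by
  let G : SimpleGraph (Fin n) := ⊤
  have h1 : ∑ d : G.Dart, c d.edge = 2 * ∑ e ∈ G.edgeFinset, c e := by
    rw [← sum_fiberwise_of_maps_to (s := univ) (t := G.edgeFinset) (g := fun d : G.Dart => d.edge)
      (by intro d _; exact SimpleGraph.mem_edgeFinset.mpr d.edge_mem), mul_sum]
    refine sum_congr rfl fun e he => ?_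
    have := G.dart_edge_fiber_card e (SimpleGraph.mem_edgeFinset.mp he)
    rw [sum_congr rfl (g := fun _ => c e) (by intro d hd; simp at hd; rw [hd])]
    rw [sum_const, this]; simp
  rw [← h1, sum_sigma']
  symm
  refine sum_bij' (fun d _ => ⟨d.fst, d.snd⟩) (fun p hp => ⟨(p.1, p.2), ?_⟩) ?_ ?_ ?_ ?_ ?_
  · simp at hp; simp only [G, SimpleGraph.top_adj]; exact fun h => hp h.symm
  · intro d _; simp
  · simp
  · simp
  · simp
  · intro d _; rfl

open Finset in
theorem avg {n : ℕ} (hn : 2 ≤ n) (c : Sym2 (Fin n) → ℤ)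
    (hbal : ∑ e ∈ (⊤ : SimpleGraph (Fin n)).edgeFinset, c e = 0)
    (F : SimpleGraph (Fin n)) [DecidableRel F.Adj] :
    ∑ f : Equiv.Perm (Fin n), ∑ e ∈ F.edgeFinset, c (Sym2.map f e) = 0 := by
  rw [sum_comm]
  refine sum_eq_zero fun e he => ?_
  have hall : ∀ u w u' w' : Fin n, u ≠ w → u' ≠ w' →
      ∑ f : Equiv.Perm (Fin n), c s(f u, f w) = ∑ f : Equiv.Perm (Fin n), c s(f u', f w') := by
    intro u w u' w' h h'
    obtain ⟨τ, h1, h2⟩ : ∃ τ : Equiv.Perm (Fin n), τ u' = u ∧ τ w' = w := by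
      refine ⟨(Equiv.swap u' u).trans (Equiv.swap (Equiv.swap u' u w') w), ?_, ?_⟩
      · simp only [Equiv.trans_apply, Equiv.swap_apply_left]
        refine Equiv.swap_apply_of_ne_of_ne ?_ h
        intro hh
        have : Equiv.swap u' u u' = Equiv.swap u' u w' := by simpa using hh
        exact h' ((Equiv.swap u' u).injective this)
      · simp
    rw [← Equiv.sum_comp (Equiv.mulRight τ) (fun f : Equiv.Perm (Fin n) => c s(f u', f w'))]
    simp [h1, h2]
  induction e using Sym2.ind with
  | _ u w =>
  have huw : u ≠ w := by
    have : F.Adj u w := by simpa using he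
    exact this.ne
  simp only [Sym2.map_mk]
  have h3 : ∑ x : Fin n, ∑ y ∈ univ.erase x, ∑ f : Equiv.Perm (Fin n), c s(f x, f y) = 0 := by
    have : ∀ f : Equiv.Perm (Fin n), ∑ x : Fin n, ∑ y ∈ univ.erase x, c s(f x, f y) = 0 := by
      intro f
      have h4 := dsum c
      rw [hbal, mul_zero, ← Equiv.sum_comp f (fun x => ∑ y ∈ univ.erase x, c s(x, y))] at h4
      rw [← h4]
      refine sum_congr rfl fun x _ => ?_
      refine sum_bij (fun y _ => f y) ?_ ?_ ?_ ?_
      · simp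
      · simp
      · intro b hb; exact ⟨f.symm b, by simpa [Equiv.symm_apply_eq] using hb, by simp⟩
      · simp
    calc _ = ∑ x : Fin n, ∑ f : Equiv.Perm (Fin n), ∑ y ∈ univ.erase x, c s(f x, f y) :=
          sum_congr rfl fun x _ => sum_comm
      _ = _ := sum_comm
      _ = 0 := sum_eq_zero fun f _ => this f
  have h5 : ∑ x : Fin n, ∑ y ∈ univ.erase x, ∑ f : Equiv.Perm (Fin n), c s(f x, f y)
      = ∑ x : Fin n, ∑ y ∈ univ.erase x, ∑ f : Equiv.Perm (Fin n), c s(f u, f w) :=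
    sum_congr rfl fun x _ => sum_congr rfl fun y hy =>
      hall _ _ _ _ (by simpa using fun h : x = y => (mem_erase.mp hy).1 h.symm) huw
  rw [h3] at h5
  simp only [sum_const, card_erase_of_mem (mem_univ _), card_univ, Fintype.card_fin,
    nsmul_eq_mul] at h5
  have hA : ((n : ℕ) : ℤ) ≠ 0 := by omega
  have hB : ((n - 1 : ℕ) : ℤ) ≠ 0 := by omega
  have := h5.symm
  rcases mul_eq_zero.mp this with h | h
  · exact absurd h hA
  · rcases mul_eq_zero.mp h with h | h
    · exact absurd h hB
    · exact h

open Finset in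
theorem change {n : ℕ} (c : Sym2 (Fin n) → ℤ)
    (hc : ∀ x y : Fin n, x ≠ y → c s(x, y) = 1 ∨ c s(x, y) = -1)
    (F : SimpleGraph (Fin n)) [DecidableRel F.Adj] (v l : Fin n) (hvl : v ≠ l)
    (hl : F.degree l ≤ 1) (f : Equiv.Perm (Fin n)) :
    ∑ e ∈ F.edgeFinset, c (Sym2.map f e)
      - ∑ e ∈ F.edgeFinset, c (Sym2.map (f * Equiv.swap v l : Equiv.Perm (Fin n)) e)
      ≤ 2 + ∑ w ∈ (F.neighborFinset v).erase l, (c s(f v, f w) - c s(f l, f w)) := by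
  rw [← sum_sub_distrib]
  set δ : Sym2 (Fin n) → ℤ := fun e =>
    c (Sym2.map f e) - c (Sym2.map (f * Equiv.swap v l : Equiv.Perm (Fin n)) e) with hδ
  have h1 : ∑ e ∈ F.edgeFinset, δ e =
      ∑ e ∈ ((F.neighborFinset v).erase l).image (fun w => s(v, w)), δ e
      + ∑ e ∈ ((F.neighborFinset l).erase v).image (fun w => s(l, w)), δ e := by
    rw [← sum_union]
    · symm
      refine sum_subset ?_ ?_
      · intro e he
        simp only [mem_union, mem_image, mem_erase, SimpleGraph.mem_neighborFinset] at he
        rcases he with ⟨w, ⟨_, h⟩, rfl⟩ | ⟨w, ⟨_, h⟩, rfl⟩ <;> simpa using h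
      · intro e he hne
        induction e using Sym2.ind with
        | _ a b =>
        have hab : F.Adj a b := by simpa using he
        simp only [mem_union, mem_image, mem_erase, SimpleGraph.mem_neighborFinset, not_or,
          not_exists, not_and] at hne
        obtain ⟨hn1, hn2⟩ := hne
        simp only [hδ, Sym2.map_mk, Equiv.Perm.coe_mul, Function.comp]
        by_cases hav : a = v
        · subst hav
          have : b = l := by
            by_contra hb; exact hn1 b ⟨hb, hab⟩ rfl
          subst this
          simp [Sym2.eq_swap]
        by_cases hbv : b = v
        · subst hbv
          have : a = l := by
            by_contra hb; exact hn1 a ⟨hb, hab.symm⟩ Sym2.eq_swap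
          subst this
          simp [Sym2.eq_swap]
        have hal : a ≠ l := by
          rintro rfl; exact hn2 b ⟨hbv, hab⟩ rfl
        have hbl : b ≠ l := by
          rintro rfl; exact hn2 a ⟨hav, hab.symm⟩ Sym2.eq_swap
        rw [Equiv.swap_apply_of_ne_of_ne hav hal, Equiv.swap_apply_of_ne_of_ne hbv hbl, sub_self]
    · rw [disjoint_left]
      intro e he he'
      simp only [mem_image, mem_erase, SimpleGraph.mem_neighborFinset] at he he'
      obtain ⟨w, ⟨h1, h2⟩, rfl⟩ := he
      obtain ⟨w', ⟨h1', h2'⟩, h⟩ := he'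
      rw [Sym2.eq_iff] at h
      rcases h with ⟨h, _⟩ | ⟨h, _⟩
      · exact hvl h.symm
      · exact h1 h.symm
  have h2 : ∑ e ∈ ((F.neighborFinset v).erase l).image (fun w => s(v, w)), δ e
      = ∑ w ∈ (F.neighborFinset v).erase l, (c s(f v, f w) - c s(f l, f w)) := by
    rw [sum_image (by intro a _ b _ h; exact Sym2.congr_right.mp h)]
    refine sum_congr rfl fun w hw => ?_
    simp only [mem_erase, SimpleGraph.mem_neighborFinset] at hw
    simp only [hδ, Sym2.map_mk, Equiv.Perm.coe_mul, Function.comp]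
    rw [Equiv.swap_apply_left, Equiv.swap_apply_of_ne_of_ne hw.2.ne' hw.1]
  have h3 : ∑ e ∈ ((F.neighborFinset l).erase v).image (fun w => s(l, w)), δ e ≤ 2 := by
    calc _ ≤ ∑ e ∈ ((F.neighborFinset l).erase v).image (fun w => s(l, w)), (2 : ℤ) := by
          refine sum_le_sum fun e he => ?_
          simp only [mem_image, mem_erase, SimpleGraph.mem_neighborFinset] at he
          obtain ⟨w, ⟨h1, h2⟩, rfl⟩ := he
          simp only [hδ, Sym2.map_mk, Equiv.Perm.coe_mul, Function.comp]
          rw [Equiv.swap_apply_right, Equiv.swap_apply_of_ne_of_ne h1 h2.ne']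
          have a1 := hc (f l) (f w) (by simpa using h2.ne)
          have a2 := hc (f v) (f w) (by simpa using h1.symm)
          omega
      _ ≤ 2 := by
          rw [sum_const]
          have : #(((F.neighborFinset l).erase v).image (fun w => s(l, w))) ≤ 1 :=
            card_image_le.trans ((card_le_card (erase_subset _ _)).trans (by simpa using hl))
          simp only [nsmul_eq_mul]
          have : ((#(((F.neighborFinset l).erase v).image (fun w => s(l, w))) : ℕ) : ℤ) ≤ 1 := by
            exact_mod_cast this
          linarith
  rw [h1, h2]; linarith

open Finset in
theorem ext_perm {n : ℕ} (f₀ : Equiv.Perm (Fin n)) (P K S : Finset (Fin n)) (v l x y : Fin n)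
    (hvP : v ∉ P) (hlP : l ∉ P) (hvl : v ≠ l) (hK : Disjoint K P) (hvK : v ∉ K) (hlK : l ∉ K)
    (hx : x ∉ P.image f₀) (hy : y ∉ P.image f₀) (hxy : x ≠ y) (hS : Disjoint S (P.image f₀))
    (hxS : x ∉ S) (hyS : y ∉ S) (hcard : #K = #S) :
    ∃ f : Equiv.Perm (Fin n), (∀ p ∈ P, f p = f₀ p) ∧ f v = x ∧ f l = y ∧ K.image f = S := by
  classical
  let e : K ≃ S := Finset.equivOfCardEq hcard
  let g : Fin n → Fin n := fun u => if h : u ∈ K then (e ⟨u, h⟩ : Fin n) else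
    if u = v then x else if u = l then y else f₀ u
  have gK : ∀ u (h : u ∈ K), g u = e ⟨u, h⟩ := fun u h => by simp [g, h]
  have gS : ∀ u, u ∈ K → g u ∈ S := fun u h => by rw [gK u h]; exact (e ⟨u, h⟩).2
  have gv : g v = x := by simp [g, hvK]
  have gl : g l = y := by simp [g, hlK, hvl.symm]
  have gP : ∀ p ∈ P, g p = f₀ p := fun p hp => by
    have h1 : p ∉ K := fun h => disjoint_left.mp hK h hp
    have h2 : p ≠ v := by rintro rfl; exact hvP hp
    have h3 : p ≠ l := by rintro rfl; exact hlP hp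
    simp [g, h1, h2, h3]
  have gPi : ∀ p ∈ P, g p ∈ P.image f₀ := fun p hp => by
    rw [gP p hp]; exact mem_image_of_mem _ hp
  have gPP : ∀ p ∈ P, ∀ q ∈ P, g p = g q → p = q := fun p hp q hq h => by
    rw [gP p hp, gP q hq] at h; exact f₀.injective h
  have gKK : ∀ p ∈ K, ∀ q ∈ K, g p = g q → p = q := fun p hp q hq h => by
    rw [gK p hp, gK q hq] at h
    have := e.injective (Subtype.ext h)
    simpa using this
  have gKP : ∀ p ∈ K, ∀ q ∈ P, g p ≠ g q := fun p hp q hq h =>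
    disjoint_left.mp hS (gS p hp) (h ▸ gPi q hq)
  have hinj : Set.InjOn g ((insert v (insert l (K ∪ P)) : Finset (Fin n)) : Set (Fin n)) := by
    intro a ha b hb hab
    simp only [coe_insert, Set.mem_insert_iff, mem_coe, mem_union] at ha hb
    rcases ha with rfl | rfl | ha | ha <;> rcases hb with rfl | rfl | hb | hb
    · rfl
    · rw [gv, gl] at hab; exact absurd hab hxy
    · rw [gv] at hab; exact absurd (hab ▸ gS b hb) hxS
    · rw [gv] at hab; exact absurd (hab ▸ gPi b hb) hx
    · rw [gv, gl] at hab; exact absurd hab.symm hxy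
    · rfl
    · rw [gl] at hab; exact absurd (hab ▸ gS b hb) hyS
    · rw [gl] at hab; exact absurd (hab ▸ gPi b hb) hy
    · rw [gv] at hab; exact absurd (hab ▸ gS a ha) hxS
    · rw [gl] at hab; exact absurd (hab ▸ gS a ha) hyS
    · exact gKK a ha b hb hab
    · exact absurd hab (gKP a ha b hb)
    · rw [gv] at hab; exact absurd (hab ▸ gPi a ha) hx
    · rw [gl] at hab; exact absurd (hab ▸ gPi a ha) hy
    · exact absurd hab.symm (gKP b hb a ha)
    · exact gPP a ha b hb hab
  obtain ⟨f, hf⟩ := Finset.exists_equiv_extend_of_card_eq (α := Fin n) (t := univ) (by simp)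
    (subset_univ _) hinj
  let f' : Equiv.Perm (Fin n) := f.trans (Equiv.subtypeUnivEquiv (by simp))
  have hf' : ∀ i ∈ (insert v (insert l (K ∪ P)) : Finset (Fin n)), f' i = g i := fun i hi => by
    rw [← hf i hi]; rfl
  refine ⟨f', fun p hp => ?_, ?_, ?_, ?_⟩
  · rw [hf' p (by simp [hp]), gP p hp]
  · rw [hf' v (by simp), gv]
  · rw [hf' l (by simp), gl]
  · refine eq_of_subset_of_card_le ?_ ?_
    · intro s hs
      obtain ⟨u, hu, rfl⟩ := mem_image.mp hs
      rw [hf' u (by simp [hu])]; exact gS u hu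
    · rw [card_image_of_injective _ f'.injective, hcard]

open Finset in
theorem big {n : ℕ} (c : Sym2 (Fin n) → ℤ)
    (hc : ∀ x y : Fin n, x ≠ y → c s(x, y) = 1 ∨ c s(x, y) = -1)
    (h0 : ∑ x : Fin n, ∑ y ∈ univ.erase x, c s(x, y) = 0) (N : Finset (Fin n))
    (hN : 3 * n < 4 * #N)
    (h : ∀ y ∈ N, 3 * n < 4 * #{s ∈ univ.erase y | c s(y, s) = -1}) : False := by
  have h1 : ∀ x : Fin n, ∑ y ∈ univ.erase x, c s(x, y)
      = (n : ℤ) - 1 - 2 * #{s ∈ univ.erase x | c s(x, s) = -1} := by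
    intro x
    have : ∀ y ∈ univ.erase x, c s(x, y) = 1 - 2 * (if c s(x, y) = -1 then 1 else 0) := by
      intro y hy
      rcases hc x y (mem_erase.mp hy).1.symm with h | h <;> simp [h]
    rw [sum_congr rfl this, sum_sub_distrib, ← mul_sum, sum_boole]
    simp only [sum_const, card_erase_of_mem (mem_univ _), card_univ, Fintype.card_fin]
    have : 1 ≤ n := by have := x.2; omega
    simp
    omega
  rw [← sum_add_sum_compl N] at h0
  have h2 : ∑ x ∈ N, ∑ y ∈ univ.erase x, 2 * c s(x, y) ≤ ∑ x ∈ N, (-n : ℤ) := by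
    refine sum_le_sum fun x hx => ?_
    rw [← mul_sum, h1]
    have := h x hx
    omega
  have h3 : ∑ x ∈ Nᶜ, ∑ y ∈ univ.erase x, c s(x, y) ≤ ∑ x ∈ Nᶜ, (n : ℤ) := by
    refine sum_le_sum fun x hx => ?_
    rw [h1]
    omega
  simp only [← mul_sum] at h2
  simp only [sum_const, card_compl, Fintype.card_fin, nsmul_eq_mul] at h2 h3
  have hle : #N ≤ n := by simpa using card_le_univ N
  push_cast [hle] at h2 h3
  have hN' : 3 * (n : ℤ) < 4 * #N := by exact_mod_cast hN
  have hle' : ((#N : ℕ) : ℤ) ≤ n := by exact_mod_cast hle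
  nlinarith

open Finset in
theorem pairs {n : ℕ} (c : Sym2 (Fin n) → ℤ)
    (hc : ∀ x y : Fin n, x ≠ y → c s(x, y) = 1 ∨ c s(x, y) = -1)
    (h0 : ∑ x : Fin n, ∑ y ∈ univ.erase x, c s(x, y) = 0) (X Y : Finset (Fin n))
    (hX : X.Nonempty) (hY : Y.Nonempty) (hXY : Disjoint X Y)
    (h : ∀ x ∈ X, ∀ y ∈ Y, 3 * n <
      4 * #{s ∈ X ∪ Y | s ≠ x ∧ s ≠ y ∧ c s(x, s) = 1 ∧ c s(y, s) = -1}) : False := by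
  have key : 3 * n < 4 * max #X #Y := by
    have h1 : ∀ x ∈ X, ∀ y ∈ Y,
        #{s ∈ X ∪ Y | s ≠ x ∧ s ≠ y ∧ c s(x, s) = 1 ∧ c s(y, s) = -1}
        ≤ #{s ∈ X | c s(s, y) = -1} + #{s ∈ Y | c s(x, s) = 1} := by
      intro x _ y _
      refine le_trans (card_le_card ?_) (card_union_le _ _)
      intro s hs
      simp only [mem_filter, mem_union] at hs ⊢
      rw [Sym2.eq_swap (a := s)]
      tauto
    have h2 : ∑ x ∈ X, ∑ y ∈ Y, 3 * n <
        ∑ x ∈ X, ∑ y ∈ Y, 4 * (#{s ∈ X | c s(s, y) = -1} + #{s ∈ Y | c s(x, s) = 1}) := by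
      refine sum_lt_sum_of_nonempty hX fun x hx => sum_lt_sum_of_nonempty hY fun y hy => ?_
      have := h x hx y hy
      have := h1 x hx y hy
      omega
    have h3 : ∑ y ∈ Y, #{s ∈ X | c s(s, y) = -1} + ∑ x ∈ X, #{s ∈ Y | c s(x, s) = 1}
        = #X * #Y := by
      have : ∑ y ∈ Y, #{s ∈ X | c s(s, y) = -1} = ∑ x ∈ X, #{s ∈ Y | c s(x, s) = -1} := by
        simp only [card_filter]
        exact sum_comm
      rw [this, ← sum_add_distrib, sum_congr rfl (g := fun _ => #Y), sum_const, smul_eq_mul]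
      intro x hx
      simp only [card_filter]
      rw [← sum_add_distrib, sum_congr rfl (g := fun _ => 1)]
      · simp
      intro y hy
      rcases hc x y (fun e => disjoint_left.mp hXY hx (e ▸ hy)) with h | h <;> simp [h]
    simp only [← mul_sum, sum_add_distrib, sum_const, smul_eq_mul] at h2
    set B := ∑ y ∈ Y, #{s ∈ X | c s(s, y) = -1}
    set R := ∑ x ∈ X, #{s ∈ Y | c s(x, s) = 1}
    have h4 : #X * B + #Y * R ≤ max #X #Y * (#X * #Y) := by
      rw [← h3, mul_add]
      gcongr
      · exact le_max_left _ _
      · exact le_max_right _ _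
    by_contra hcon
    push Not at hcon
    have h5 : 4 * max #X #Y * (#X * #Y) ≤ 3 * n * (#X * #Y) := Nat.mul_le_mul_right _ hcon
    nlinarith
  obtain ⟨x, hx⟩ := hX
  obtain ⟨y, hy⟩ := hY
  rcases le_total #X #Y with hle | hle
  · rw [max_eq_right hle] at key
    refine big c hc h0 Y key fun y hy => (h x hx y hy).trans_le ?_
    gcongr
    intro s hs
    simp only [mem_filter, mem_erase, mem_univ, and_true] at hs ⊢
    exact ⟨hs.2.2.1, hs.2.2.2.2⟩
  · rw [max_eq_left hle] at key
    refine big (fun e => - c e) (fun x y hxy => ?_) (by simp only [sum_neg_distrib, h0, neg_zero]) X key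
      fun x hx => (h x hx y hy).trans_le ?_
    · rcases hc x y hxy with h | h <;> simp [h]
    gcongr
    intro s hs
    simp only [mem_filter, mem_erase, mem_univ, and_true] at hs ⊢
    exact ⟨hs.2.1, by simp [hs.2.2.2.1]⟩

open Finset in
theorem step {n : ℕ} (c : Sym2 (Fin n) → ℤ)
    (hc : ∀ x y : Fin n, x ≠ y → c s(x, y) = 1 ∨ c s(x, y) = -1)
    (h0 : ∑ x : Fin n, ∑ y ∈ univ.erase x, c s(x, y) = 0)
    (F : SimpleGraph (Fin n)) [DecidableRel F.Adj] (W : Equiv.Perm (Fin n) → ℤ)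
    (hW : ∀ f, W f = ∑ e ∈ F.edgeFinset, c (Sym2.map f e))
    (ε D B Δ : ℝ) (hΔ : ∀ v, (F.degree v : ℝ) ≤ Δ) (hεn : 1 ≤ ε * n)
    (hD : D = Δ - (1 / 4 - 2 * ε) * n)
    (hB1 : 1 + 2 / ε ≤ B) (hB2 : 2 + D ≤ B) (hB3 : 2 ≤ B)
    (hbig : ∀ f, B < |(W f : ℝ)|)
    (l : Fin n) (hl : F.degree l ≤ 1) (P : Finset (Fin n)) (v : Fin n) (hvP : v ∉ P)
    (hlP : l ∉ P) (hvl : v ≠ l)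
    (hgood : ∃ f g : Equiv.Perm (Fin n), (∀ p ∈ P, f p = g p) ∧ 0 < W f ∧ W g < 0)
    (hv : (F.degree v : ℝ) ≤ 2 / ε ∨ (#(F.neighborFinset v ∩ P) ≤ 1 ∧ ((#P : ℝ) + 1 < ε * n))) :
    ∃ f g : Equiv.Perm (Fin n), (∀ p ∈ insert v P, f p = g p) ∧ 0 < W f ∧ W g < 0 := by
  classical
  by_contra hno
  obtain ⟨f₀, g₀, hfg, hf₀, hg₀⟩ := hgood
  have hne : ∀ f, W f < 0 ∨ 0 < W f := by
    intro f
    have := hbig f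
    rcases lt_trichotomy (W f) 0 with h | h | h
    · exact Or.inl h
    · rw [h] at this; simp at this; linarith
    · exact Or.inr h
  set Q := P.image f₀ with hQ
  have hQc : #Q = #P := card_image_of_injective _ f₀.injective
  set X : Finset (Fin n) := univ.filter fun x =>
    ∃ f : Equiv.Perm (Fin n), (∀ p ∈ P, f p = f₀ p) ∧ f v = x ∧ 0 < W f with hX
  set Y : Finset (Fin n) := univ.filter fun x =>
    ∃ f : Equiv.Perm (Fin n), (∀ p ∈ P, f p = f₀ p) ∧ f v = x ∧ W f < 0 with hY
  have hnotQ : ∀ f : Equiv.Perm (Fin n), (∀ p ∈ P, f p = f₀ p) → f v ∉ Q := by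
    intro f hf hm
    obtain ⟨p, hp, he⟩ := mem_image.mp hm
    rw [← hf p hp] at he
    exact hvP (f.injective he ▸ hp)
  have hXpos : ∀ x ∈ X, ∀ f : Equiv.Perm (Fin n), (∀ p ∈ P, f p = f₀ p) → f v = x → 0 < W f := by
    intro x hx f hf hfv
    obtain ⟨g, hg, hgv, hgW⟩ := (mem_filter.mp hx).2
    rcases hne f with h | h
    · refine absurd ⟨g, f, fun p hp => ?_, hgW, h⟩ hno
      rcases mem_insert.mp hp with rfl | hp
      · rw [hgv, hfv]
      · rw [hg p hp, hf p hp]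
    · exact h
  have hYneg : ∀ x ∈ Y, ∀ f : Equiv.Perm (Fin n), (∀ p ∈ P, f p = f₀ p) → f v = x → W f < 0 := by
    intro x hx f hf hfv
    obtain ⟨g, hg, hgv, hgW⟩ := (mem_filter.mp hx).2
    rcases hne f with h | h
    · exact h
    · refine absurd ⟨f, g, fun p hp => ?_, h, hgW⟩ hno
      rcases mem_insert.mp hp with rfl | hp
      · rw [hgv, hfv]
      · rw [hg p hp, hf p hp]
  have hXne : f₀ v ∈ X := by
    simp only [hX, mem_filter, mem_univ, true_and]; exact ⟨f₀, fun _ _ => rfl, rfl, hf₀⟩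
  have hYne : g₀ v ∈ Y := by
    simp only [hY, mem_filter, mem_univ, true_and]
    exact ⟨g₀, fun p hp => (hfg p hp).symm, rfl, hg₀⟩
  have hXY : Disjoint X Y := by
    rw [disjoint_left]
    intro x hx hy
    obtain ⟨g, hg, hgv, hgW⟩ := (mem_filter.mp hx).2
    have := hYneg x hy g hg hgv
    omega
  have hXQ : ∀ x ∈ X, x ∉ Q := by
    intro x hx
    obtain ⟨g, hg, rfl, hgW⟩ := (mem_filter.mp hx).2
    exact hnotQ g hg
  have hYQ : ∀ x ∈ Y, x ∉ Q := by
    intro x hx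
    obtain ⟨g, hg, rfl, hgW⟩ := (mem_filter.mp hx).2
    exact hnotQ g hg
  have hcover : ∀ x, x ∉ Q → x ∈ X ∪ Y := by
    intro x hx
    let f : Equiv.Perm (Fin n) := Equiv.swap (f₀ v) x * f₀
    have hf : ∀ p ∈ P, f p = f₀ p := by
      intro p hp
      simp only [f, Equiv.Perm.coe_mul, Function.comp]
      refine Equiv.swap_apply_of_ne_of_ne ?_ ?_
      · intro h; exact hvP (f₀.injective h ▸ hp)
      · rintro rfl; exact hx (mem_image_of_mem _ hp)
    have hfv : f v = x := by simp [f]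
    simp only [hX, hY, mem_union, mem_filter, mem_univ, true_and]
    rcases hne f with h | h
    · exact Or.inr ⟨f, hf, hfv, h⟩
    · exact Or.inl ⟨f, hf, hfv, h⟩
  have hd2 : ∀ x y s : Fin n, s ≠ x → s ≠ y → c s(x, s) - c s(y, s) ≤ 2 := by
    intro x y s h1 h2
    have := hc x s h1.symm
    have := hc y s h2.symm
    omega
  have hgap : ∀ x ∈ X, ∀ y ∈ Y, ∀ f : Equiv.Perm (Fin n), (∀ p ∈ P, f p = f₀ p) → f v = x →
      f l = y → 2 * B < ((2 + ∑ w ∈ (F.neighborFinset v).erase l,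
        (c s(x, f w) - c s(y, f w)) : ℤ) : ℝ) := by
    intro x hx y hy f hf hfv hfl
    have h1 := hXpos x hx f hf hfv
    have h2 := hYneg y hy (f * Equiv.swap v l) (fun p hp => by
      simp only [Equiv.Perm.coe_mul, Function.comp]
      rw [Equiv.swap_apply_of_ne_of_ne (ne_of_mem_of_not_mem hp hvP) (ne_of_mem_of_not_mem hp hlP), hf p hp])
      (by simp [hfl])
    have h3 := change c hc F v l hvl hl f
    rw [← hW, ← hW, hfv, hfl] at h3
    have h4 := hbig f
    have h5 := hbig (f * Equiv.swap v l)
    rw [abs_of_pos (by exact_mod_cast h1)] at h4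
    rw [abs_of_neg (by exact_mod_cast h2)] at h5
    have h6 : ((W f - W (f * Equiv.swap v l) : ℤ) : ℝ) ≤ _ := Int.cast_le.mpr h3
    refine lt_of_lt_of_le ?_ h6
    push_cast
    linarith
  rcases hv with hlow | ⟨hnb, hsmall⟩
  · -- low degree
    have hxy : f₀ v ≠ g₀ v := fun h => disjoint_left.mp hXY hXne (h ▸ hYne)
    obtain ⟨f, hf, hfv, hfl, -⟩ := ext_perm f₀ P ∅ ∅ v l (f₀ v) (g₀ v) hvP hlP hvl (by simp)
      (by simp) (by simp) (hXQ _ hXne) (hYQ _ hYne) hxy (by simp) (by simp) (by simp) rfl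
    have h1 := hgap _ hXne _ hYne f hf hfv hfl
    have h2 : ∑ w ∈ (F.neighborFinset v).erase l, (c s(f₀ v, f w) - c s(g₀ v, f w))
        ≤ ∑ w ∈ (F.neighborFinset v).erase l, 2 := by
      refine sum_le_sum fun w hw => hd2 _ _ _ ?_ ?_
      · rw [← hfv]; intro h; have := f.injective h; subst this; simp at hw
      · rw [← hfl]; intro h; have := f.injective h; subst this; simp at hw
    have h3 : #((F.neighborFinset v).erase l) ≤ F.degree v :=
      (card_le_card (erase_subset _ _)).trans (by simp)
    have h4 : ((2 + ∑ w ∈ (F.neighborFinset v).erase l,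
        (c s(f₀ v, f w) - c s(g₀ v, f w)) : ℤ) : ℝ) ≤ 2 + 2 * F.degree v := by
      rw [sum_const, nsmul_eq_mul] at h2
      have : (2 + ∑ w ∈ (F.neighborFinset v).erase l,
        (c s(f₀ v, f w) - c s(g₀ v, f w)) : ℤ) ≤ 2 + 2 * F.degree v := by omega
      exact_mod_cast this
    linarith
  · refine pairs c hc h0 X Y ⟨_, hXne⟩ ⟨_, hYne⟩ hXY fun x hx y hy => ?_
    have hxy : x ≠ y := fun h => disjoint_left.mp hXY hx (h ▸ hy)
    set A : Finset (Fin n) := univ \ insert x (insert y Q) with hA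
    have hcA : #A + #P + 2 = n := by
      have h1 : #(insert x (insert y Q)) = #P + 2 := by
        rw [card_insert_of_notMem, card_insert_of_notMem (hYQ y hy), hQc]
        simp [hxy, hXQ x hx]
      have h2 := card_sdiff_add_card_eq_card (subset_univ (insert x (insert y Q)))
      rw [h1, card_univ, Fintype.card_fin] at h2
      omega
    set K := (F.neighborFinset v \ P).erase l with hK
    have hKA : #K ≤ #A := by
      have h1 : #(insert v (insert l P)) = #P + 2 := by
        rw [card_insert_of_notMem, card_insert_of_notMem hlP]
        simp [hvl, hvP]
      have h2 := card_sdiff_add_card_eq_card (subset_univ (insert v (insert l P)))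
      rw [h1, card_univ, Fintype.card_fin] at h2
      have h3 : K ⊆ univ \ insert v (insert l P) := by
        intro w hw
        simp only [hK, mem_erase, mem_sdiff, SimpleGraph.mem_neighborFinset] at hw
        simp only [mem_sdiff, mem_univ, true_and, mem_insert, not_or]
        exact ⟨hw.2.1.ne', hw.1, hw.2.2⟩
      have := card_le_card h3
      omega
    set p : Fin n → Prop := fun s => c s(x, s) = 1 ∧ c s(y, s) = -1 with hp
    set G := A.filter (fun s => ¬ p s) with hG
    have hGb : #(A.filter p) + #G = #A := card_filter_add_card_filter_not _
    obtain ⟨S, hSA, hSK, hSG⟩ : ∃ S ⊆ A, #S = #K ∧ (#(S \ G) : ℤ) ≤ max 0 ((#K : ℤ) - #G) := by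
      rcases le_total #K #G with h | h
      · obtain ⟨S, hS, hSc⟩ := exists_subset_card_eq h
        refine ⟨S, hS.trans (filter_subset _ _), hSc, ?_⟩
        rw [sdiff_eq_empty_iff_subset.mpr hS]; simp
      · obtain ⟨S, hS1, hS2, hSc⟩ := exists_subsuperset_card_eq (filter_subset _ A : G ⊆ A) h hKA
        refine ⟨S, hS2, hSc, ?_⟩
        rw [card_sdiff_of_subset hS1, hSc, Nat.cast_sub h]
        exact le_max_right _ _
    have hSn : ∀ s ∈ S, s ≠ x ∧ s ≠ y ∧ s ∉ Q := by
      intro s hs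
      simpa [hA] using hSA hs
    obtain ⟨f, hf, hfv, hfl, hfK⟩ := ext_perm f₀ P K S v l x y hvP hlP hvl
      (by rw [disjoint_left]; intro a ha; simp [hK] at ha; exact ha.2.2)
      (by simp [hK]) (by simp [hK]) (hXQ _ hx) (hYQ _ hy) hxy
      (by rw [disjoint_left]; intro a ha; exact (hSn a ha).2.2)
      (fun h => (hSn x h).1 rfl) (fun h => (hSn y h).2.1 rfl) hSK.symm
    have h1 := hgap _ hx _ hy f hf hfv hfl
    have hsplit : (F.neighborFinset v).erase l = K ∪ (F.neighborFinset v ∩ P) := by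
      ext w
      simp only [hK, mem_erase, mem_union, mem_sdiff, mem_inter]
      have : w ∈ P → w ≠ l := fun h h' => hlP (h' ▸ h)
      tauto
    have hdis : Disjoint K (F.neighborFinset v ∩ P) := by
      rw [disjoint_left]; intro a ha hb
      simp only [hK, mem_erase, mem_sdiff, mem_inter] at ha hb
      exact ha.2.2 hb.2
    have h2 : ∑ w ∈ F.neighborFinset v ∩ P, (c s(x, f w) - c s(y, f w)) ≤ 2 := by
      calc _ ≤ ∑ w ∈ F.neighborFinset v ∩ P, (2 : ℤ) := by
            refine sum_le_sum fun w hw => hd2 _ _ _ ?_ ?_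
            · rw [← hfv]; intro h; have := f.injective h; subst this; simp at hw
            · rw [← hfl]; intro h; have := f.injective h; subst this
              exact hlP (mem_inter.mp hw).2
        _ ≤ 2 := by rw [sum_const, nsmul_eq_mul]; omega
    have h3 : ∑ w ∈ K, (c s(x, f w) - c s(y, f w)) ≤ 2 * #(S \ G) := by
      calc _ = ∑ s ∈ S, (c s(x, s) - c s(y, s)) := by
            rw [← hfK, sum_image (fun a _ b _ h => f.injective h)]
        _ ≤ ∑ s ∈ S, (if s ∈ S \ G then 2 else 0) := by
            refine sum_le_sum fun s hs => ?_
            obtain ⟨hs1, hs2, -⟩ := hSn s hs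
            split_ifs with h
            · exact hd2 _ _ _ hs1 hs2
            · have hsG : s ∈ G := by
                by_contra h'; exact h (mem_sdiff.mpr ⟨hs, h'⟩)
              have hpp : ¬ (c s(x, s) = 1 ∧ c s(y, s) = -1) := (mem_filter.mp hsG).2
              have := hc x s hs1.symm
              have := hc y s hs2.symm
              omega
        _ = 2 * #(S \ G) := by
            rw [sum_ite_mem, inter_eq_right.mpr sdiff_subset, sum_const, nsmul_eq_mul]
            push_cast; ring
    rw [hsplit, sum_union hdis] at h1
    have h4 : (2 + (∑ w ∈ K, (c s(x, f w) - c s(y, f w)) +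
        ∑ w ∈ F.neighborFinset v ∩ P, (c s(x, f w) - c s(y, f w))) : ℤ)
        ≤ 2 * (2 + max 0 ((#K : ℤ) - #G)) := by omega
    have h5 := h1.trans_le (Int.cast_le.mpr h4)
    push_cast at h5
    have hKd : (#K : ℝ) ≤ Δ := by
      refine le_trans ?_ (hΔ v)
      have : #K ≤ F.degree v :=
        (card_le_card ((erase_subset _ _).trans sdiff_subset)).trans (by simp)
      exact_mod_cast this
    have h6 : D < (#K : ℝ) - #G := by
      rcases max_cases (0 : ℝ) ((#K : ℝ) - #G) with ⟨h, _⟩ | ⟨h, _⟩ <;> rw [h] at h5 <;> linarith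
    have h7 : (3 * n : ℝ) < 4 * #(A.filter p) := by
      have e1 : (#A : ℝ) + #P + 2 = n := by exact_mod_cast hcA
      have e2 : (#(A.filter p) : ℝ) + #G = #A := by exact_mod_cast hGb
      linarith
    have h8 : 3 * n < 4 * #(A.filter p) := by exact_mod_cast h7
    refine h8.trans_le ?_
    gcongr
    intro s hs
    simp only [mem_filter, hA, mem_sdiff, mem_univ, true_and, mem_insert, not_or, hp] at hs
    simp only [mem_filter]
    exact ⟨hcover s hs.1.2.2, hs.1.1, hs.1.2.1, hs.2.1, hs.2.2⟩

/-- Let `n ≥ 32`, let `c` be a balanced `±1`-colouring of the edges of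
`K_n`, let `F` be a forest on `n` vertices with maximum degree `Δ ≤ n/2`, and let
`1/n ≤ ε ≤ 1/8`. Then there is a copy `F'` of `F` in `K_n` with
`|c(F')| ≤ max (1 + 2/ε) (2 + (Δ - (1/4 - 2ε)n)₊)`. -/
theorem almost_balanced_spanning_forest_eps
    (n : ℕ) (hn : 32 ≤ n)
    (c : Sym2 (Fin n) → ℤ)
    (hc : ∀ e ∈ (⊤ : SimpleGraph (Fin n)).edgeFinset, c e = 1 ∨ c e = -1)
    (hbal : ∑ e ∈ (⊤ : SimpleGraph (Fin n)).edgeFinset, c e = 0)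
    (F : SimpleGraph (Fin n)) [DecidableRel F.Adj]
    (hF : F.IsAcyclic) (Δ : ℕ) (hΔ : F.maxDegree = Δ)
    (hdeg : (Δ : ℝ) ≤ (n : ℝ) / 2)
    (ε : ℝ) (hε₁ : 1 / (n : ℝ) ≤ ε) (hε₂ : ε ≤ 1 / 8) :
    ∃ f : Fin n ↪ Fin n,
      |(∑ e ∈ F.edgeFinset, c (Sym2.map (⇑f) e) : ℝ)| ≤
        max (1 + 2 / ε) (2 + max ((Δ : ℝ) - (1 / 4 - 2 * ε) * n) 0) := by
  classical
  by_contra hcon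
  push Not at hcon
  have hn0 : (0 : ℝ) < n := by exact_mod_cast (by omega : 0 < n)
  have hε0 : 0 < ε := lt_of_lt_of_le (by positivity) hε₁
  have hεn : 1 ≤ ε * n := by rwa [div_le_iff₀ hn0] at hε₁
  have hc' : ∀ x y : Fin n, x ≠ y → c s(x, y) = 1 ∨ c s(x, y) = -1 := fun x y h =>
    hc _ (by simpa using h)
  have h0 : ∑ x : Fin n, ∑ y ∈ Finset.univ.erase x, c s(x, y) = 0 := by
    rw [dsum, hbal, mul_zero]
  let W : Equiv.Perm (Fin n) → ℤ := fun f => ∑ e ∈ F.edgeFinset, c (Sym2.map f e)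
  set B := max (1 + 2 / ε) (2 + max ((Δ : ℝ) - (1 / 4 - 2 * ε) * n) 0) with hB
  have hB3 : 2 ≤ B := le_trans (by linarith [le_max_right ((Δ : ℝ) - (1 / 4 - 2 * ε) * n) 0])
    (le_max_right _ _)
  have hB2 : 2 + ((Δ : ℝ) - (1 / 4 - 2 * ε) * n) ≤ B :=
    le_trans (by linarith [le_max_left ((Δ : ℝ) - (1 / 4 - 2 * ε) * n) 0]) (le_max_right _ _)
  have hbig : ∀ f, B < |(W f : ℝ)| := by
    intro f
    have := hcon f.toEmbedding
    simp only [W]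
    push_cast
    simpa using this
  have : Nonempty (Fin n) := ⟨⟨0, by omega⟩⟩
  obtain ⟨l, hl⟩ := acyc_leaf F hF
  have hne : ∀ f, W f ≠ 0 := by
    intro f h
    have := hbig f
    rw [h] at this; simp at this; linarith
  have hsum : ∑ f, W f = 0 := avg (by omega) c hbal F
  have hbase : ∃ f g : Equiv.Perm (Fin n), 0 < W f ∧ W g < 0 := by
    have h1 : ∃ f ∈ Finset.univ, 0 < W f := by
      refine Finset.exists_pos_of_sum_zero_of_exists_nonzero W hsum ⟨1, Finset.mem_univ _, hne 1⟩
    have h2 : ∃ f ∈ Finset.univ, 0 < - W f := by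
      refine Finset.exists_pos_of_sum_zero_of_exists_nonzero (fun f => - W f)
        (by rw [Finset.sum_neg_distrib, hsum, neg_zero]) ⟨1, Finset.mem_univ _, ?_⟩
      simpa using hne 1
    obtain ⟨f, -, hf⟩ := h1
    obtain ⟨g, -, hg⟩ := h2
    exact ⟨f, g, hf, by omega⟩
  let H : Finset (Fin n) := Finset.univ.filter fun v => 2 / ε < (F.degree v : ℝ)
  have hH : (H.card : ℝ) < ε * n := by
    have h1 := acyc_sum_deg F hF
    rw [Fintype.card_fin] at h1
    have h2 : (∑ v, (F.degree v : ℝ)) + 2 ≤ 2 * n := by exact_mod_cast h1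
    have h3 : ∑ v ∈ H, (2 / ε) ≤ ∑ v ∈ H, (F.degree v : ℝ) :=
      Finset.sum_le_sum fun v hv => (Finset.mem_filter.mp hv).2.le
    have h4 : ∑ v ∈ H, (F.degree v : ℝ) ≤ ∑ v, (F.degree v : ℝ) :=
      Finset.sum_le_sum_of_subset_of_nonneg (Finset.subset_univ _) fun _ _ _ => by positivity
    rw [Finset.sum_const, nsmul_eq_mul] at h3
    have h5 : (H.card : ℝ) * (2 / ε) < 2 * n := by linarith
    rw [← mul_div_assoc, div_lt_iff₀ hε0] at h5
    linarith
  have main : ∀ P : Finset (Fin n), l ∉ P →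
      ∃ f g : Equiv.Perm (Fin n), (∀ p ∈ P, f p = g p) ∧ 0 < W f ∧ W g < 0 := by
    intro P
    induction P using Finset.strongInduction with
    | H P ih =>
    intro hlP
    rcases P.eq_empty_or_nonempty with rfl | hP
    · obtain ⟨f, g, h⟩ := hbase
      exact ⟨f, g, by simp, h⟩
    have key : ∃ v ∈ P, (F.degree v : ℝ) ≤ 2 / ε ∨
        ((F.neighborFinset v ∩ P.erase v).card ≤ 1 ∧ (((P.erase v).card : ℝ) + 1 < ε * n)) := by
      by_cases hPH : P ⊆ H
      · obtain ⟨v, hv, h1⟩ := acyc_leaf_on F hF P hP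
        refine ⟨v, hv, Or.inr ⟨(Finset.card_le_card ?_).trans h1, ?_⟩⟩
        · exact Finset.inter_subset_inter_left (Finset.erase_subset _ _)
        · have : (P.erase v).card + 1 = P.card := Finset.card_erase_add_one hv
          have h2 : ((P.erase v).card : ℝ) + 1 = P.card := by exact_mod_cast this
          have h3 : (P.card : ℝ) ≤ H.card := by exact_mod_cast Finset.card_le_card hPH
          linarith
      · obtain ⟨v, hv, hvH⟩ := Finset.not_subset.mp hPH
        refine ⟨v, hv, Or.inl ?_⟩
        by_contra h
        exact hvH (Finset.mem_filter.mpr ⟨Finset.mem_univ _, not_le.mp h⟩)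
    obtain ⟨v, hv, hcase⟩ := key
    have hlP' : l ∉ P.erase v := fun h => hlP (Finset.mem_of_mem_erase h)
    have := step c hc' h0 F W (fun _ => rfl) ε _ B Δ
      (fun v => by exact_mod_cast hΔ ▸ F.degree_le_maxDegree v) hεn rfl (le_max_left _ _) hB2 hB3
      hbig l hl (P.erase v) v (Finset.notMem_erase _ _) hlP' (fun h => hlP (h ▸ hv))
      (ih _ (Finset.erase_ssubset hv) hlP') hcase
    rwa [Finset.insert_erase hv] at this
  obtain ⟨f, g, hfg, h1, h2⟩ := main (Finset.univ.erase l) (Finset.notMem_erase _ _)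
  have hfg' : f = g := by
    have hne' : ∀ p, p ≠ l → f p = g p := fun p hp => hfg p (by simp [hp])
    have hll : f l = g l := by
      obtain ⟨q, hq⟩ := g.surjective (f l)
      by_cases hql : q = l
      · rw [← hq, hql]
      · rw [← hne' q hql] at hq
        exact absurd (f.injective hq) hql
    ext p
    by_cases hp : p = l
    · rw [hp, hll]
    · rw [hne' p hp]
  rw [hfg'] at h1
  omega
end

section
/- Let n ≥ 32 be an integer and let ξ be a real number with −1/4 + 16/n ≤ ξ ≤ 1/4. Then there exists a real number ε with 1/n ≤ ε ≤ 1/8 such that max( 2/ε + 1 , 2 + max(2εn + ξn, 0) ) ≤ (3 + ξn)/2 + √( (1 + ξn)² + 16n )/2. In particular, the infimum over ε ∈ [1/n, 1/8] of max( 2/ε + 1 , 2 + max(2εn + ξn, 0) ) is at most (3 + ξn)/2 + √( (1 + ξn)² + 16n )/2. -/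
/-- optimisation lemma. For an integer `n ≥ 32` and a real
`-1/4 + 16/n ≤ ξ ≤ 1/4`, there exists `ε ∈ [1/n, 1/8]` with
`max (2/ε + 1) (2 + (2εn + ξn)₊) ≤ (3 + ξn)/2 + √((1 + ξn)² + 16n)/2`; in particular
the infimum over `ε ∈ [1/n, 1/8]` of the left-hand side is at most the right-hand
side. -/
theorem optimisation_lemma
    (n : ℕ) (hn : 32 ≤ n) (ξ : ℝ)
    (hξ₁ : -(1 / 4) + 16 / (n : ℝ) ≤ ξ) (hξ₂ : ξ ≤ 1 / 4) :
    (∃ ε : ℝ, 1 / (n : ℝ) ≤ ε ∧ ε ≤ 1 / 8 ∧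
        max (2 / ε + 1) (2 + max (2 * ε * n + ξ * n) 0) ≤
          (3 + ξ * n) / 2 + Real.sqrt ((1 + ξ * n) ^ 2 + 16 * n) / 2) ∧
      sInf ((fun ε : ℝ => max (2 / ε + 1) (2 + max (2 * ε * n + ξ * n) 0)) ''
          Set.Icc (1 / (n : ℝ)) (1 / 8)) ≤
        (3 + ξ * n) / 2 + Real.sqrt ((1 + ξ * n) ^ 2 + 16 * n) / 2 := by
  have hN : (32 : ℝ) ≤ n := by exact_mod_cast hn
  have hN0 : (0 : ℝ) < n := by linarith
  have key : ∃ ε : ℝ, 1 / (n : ℝ) ≤ ε ∧ ε ≤ 1 / 8 ∧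
        max (2 / ε + 1) (2 + max (2 * ε * n + ξ * n) 0) ≤
          (3 + ξ * n) / 2 + Real.sqrt ((1 + ξ * n) ^ 2 + 16 * n) / 2 := by
    have ha1 : 16 - (n : ℝ) / 4 ≤ ξ * n := by
      have h := mul_le_mul_of_nonneg_right hξ₁ hN0.le
      have e : (-(1 / 4) + 16 / (n : ℝ)) * n = 16 - (n : ℝ) / 4 := by
        field_simp
        ring
      linarith
    have ha2 : ξ * n ≤ (n : ℝ) / 4 := by nlinarith
    generalize ξ * (n : ℝ) = a at *
    generalize (n : ℝ) = N at *
    have hs2 : Real.sqrt ((1 + a) ^ 2 + 16 * N) ^ 2 = (1 + a) ^ 2 + 16 * N :=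
      Real.sq_sqrt (by positivity)
    have hup : Real.sqrt ((1 + a) ^ 2 + 16 * N) ≤ N / 2 + 1 + a := by
      apply Real.sqrt_le_iff.mpr
      constructor
      · linarith
      · nlinarith
    have hlo : 5 + a ≤ Real.sqrt ((1 + a) ^ 2 + 16 * N) := by
      apply Real.le_sqrt_of_sq_le
      nlinarith
    generalize Real.sqrt ((1 + a) ^ 2 + 16 * N) = s at *
    have hd : 0 < s - (1 + a) := by linarith
    have h2 : 2 / ((s - (1 + a)) / (4 * N)) = (s + 1 + a) / 2 := by
      field_simp
      nlinarith
    have he8 : (s - (1 + a)) / (4 * N) ≤ 1 / 8 := by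
      rw [div_le_div_iff₀ (by positivity) (by norm_num)]
      linarith
    have h16 : 16 ≤ (s + 1 + a) / 2 := by
      rw [← h2, le_div_iff₀ (by positivity)]
      linarith
    refine ⟨(s - (1 + a)) / (4 * N), ?_, he8, ?_⟩
    · rw [div_le_div_iff₀ hN0 (by positivity)]
      nlinarith
    · rw [h2]
      have h3 : 2 * ((s - (1 + a)) / (4 * N)) * N = (s - (1 + a)) / 2 := by
        field_simp
        ring
      rw [h3]
      refine max_le (by linarith) ?_
      have : max ((s - (1 + a)) / 2 + a) 0 ≤ (s + a - 1) / 2 :=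
        max_le (by linarith) (by linarith)
      linarith
  refine ⟨key, ?_⟩
  obtain ⟨ε, h1, h2, h3⟩ := key
  refine le_trans (csInf_le ⟨2, ?_⟩ ⟨ε, ⟨h1, h2⟩, rfl⟩) h3
  rintro _ ⟨x, _, rfl⟩
  refine le_trans ?_ (le_max_right _ _)
  have := le_max_right (2 * x * n + ξ * n) 0
  linarith
end

section
/- There exists ε₀ > 0 such that for every real ε with 0 < ε < ε₀ there exists n₀ such that for every integer n ≥ n₀ there is a red-blue colouring c : E(K_n) → {−1, +1} (with red = +1, blue = −1) whose red edge density d_R (the number of red edges divided by n(n−1)/2) satisfies 1/2 − ε ≤ d_R ≤ 1/2 + ε, and such that every copy T in K_n of the star on n vertices satisfies |c(T)| ≥ (1/2 + ε²)n. -/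
lemma per_shift (g : ℕ → ℤ) (m : ℕ) (hg : ∀ v, g (v + m) = g v) (c : ℕ) :
    ∑ v ∈ Finset.range m, g (v + c) = ∑ v ∈ Finset.range m, g v := by
  induction c with
  | zero => simp
  | succ c ih =>
    rw [← ih]
    have h1 := Finset.sum_range_succ (fun v => g (v + c)) m
    have h2 := Finset.sum_range_succ' (fun v => g (v + c)) m
    have h3 : g (m + c) = g (0 + c) := by
      rw [zero_add, add_comm m c]; exact hg c
    have h4 : ∑ v ∈ Finset.range m, g (v + (c + 1)) = ∑ v ∈ Finset.range m, g (v + 1 + c) :=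
      Finset.sum_congr rfl (fun v _ => by congr 1; ring)
    rw [h4]; linarith

lemma per_mul (g : ℕ → ℤ) (m : ℕ) (hg : ∀ v, g (v + m) = g v) (q v : ℕ) :
    g (v + m * q) = g v := by
  induction q with
  | zero => simp
  | succ q ih => rw [mul_add, mul_one, ← add_assoc, hg, ih]

lemma sum_range_block (f : ℕ → ℤ) (m q : ℕ) :
    ∑ i ∈ Finset.range (m * q), f i =
      ∑ j ∈ Finset.range q, ∑ u ∈ Finset.range m, f (u + m * j) := by
  induction q with
  | zero => simp
  | succ q ih =>
    rw [Finset.sum_range_succ, ← ih, mul_add, mul_one, Finset.sum_range_add]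
    congr 1
    exact Finset.sum_congr rfl (fun v _ => by congr 1; ring)

lemma abs_sum_le (f : ℕ → ℤ) (hf : ∀ i, |f i| ≤ 1) (r : ℕ) :
    |∑ i ∈ Finset.range r, f i| ≤ r := by
  refine (Finset.abs_sum_le_sum_abs _ _).trans ?_
  refine (Finset.sum_le_sum (fun i _ => hf i)).trans ?_
  simp

lemma per_approx (f : ℕ → ℤ) (m : ℕ) (hm : 0 < m) (hg : ∀ v, f (v + m) = f v)
    (hf : ∀ i, |f i| ≤ 1) (n : ℕ) (S : ℤ) (hS : ∑ i ∈ Finset.range m, f i = S) :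
    |(m : ℤ) * ∑ i ∈ Finset.range n, f i - n * S| ≤ 2 * (m : ℤ) ^ 2 := by
  have hSb : |S| ≤ m := hS ▸ abs_sum_le f hf m
  have hn : n = m * (n / m) + n % m := (Nat.div_add_mod n m).symm
  have hr : n % m < m := Nat.mod_lt _ hm
  generalize n / m = q at hn
  generalize n % m = r at hn hr
  subst hn
  have h1 : ∑ i ∈ Finset.range (m * q + r), f i = q * S + ∑ i ∈ Finset.range r, f i := by
    rw [Finset.sum_range_add, sum_range_block]
    congr 1
    · rw [← hS]; simp [per_mul f m hg]
    · refine Finset.sum_congr rfl (fun v _ => ?_)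
      rw [add_comm]; exact per_mul f m hg q v
  have h2 := abs_sum_le f hf r
  rw [h1]
  generalize ∑ i ∈ Finset.range r, f i = X at h2
  push_cast
  have hr' : (r : ℤ) ≤ m := by exact_mod_cast hr.le
  have hr0 : (0 : ℤ) ≤ r := by positivity
  have e : (m : ℤ) * (q * S + X) - (m * q + r) * S = m * X - r * S := by ring
  rw [e]
  have a1 : |(m : ℤ) * X| ≤ m * m := by
    rw [abs_mul, Nat.abs_cast]; gcongr; exact h2.trans hr'
  have a2 : |(r : ℤ) * S| ≤ m * m := by
    rw [abs_mul, Nat.abs_cast]; gcongr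
  rw [abs_le] at *
  constructor <;> nlinarith [a1.1, a1.2, a2.1, a2.2]

/-- side indicator -/
def sgA (M i : ℕ) : ℤ := if i % (2 * M) < M + 1 then 1 else -1

def hh (M v : ℕ) : ℤ := if v % (2 * M) < M - 1 then 1 else -1

def colr (M i j : ℕ) : ℤ :=
  if sgA M i = sgA M j then sgA M i else hh M (i / (2 * M) + j / (2 * M))

lemma sgA_cases (M i : ℕ) : sgA M i = 1 ∨ sgA M i = -1 := by unfold sgA; split_ifs <;> simp

lemma hh_cases (M i : ℕ) : hh M i = 1 ∨ hh M i = -1 := by unfold hh; split_ifs <;> simp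

lemma colr_cases (M i j : ℕ) : colr M i j = 1 ∨ colr M i j = -1 := by
  unfold colr; split_ifs
  · exact sgA_cases _ _
  · exact hh_cases _ _

lemma colr_symm (M i j : ℕ) : colr M i j = colr M j i := by
  unfold colr
  rw [add_comm (i / (2 * M))]
  by_cases h : sgA M i = sgA M j
  · simp [h]
  · rw [if_neg h, if_neg (Ne.symm h)]

lemma abs_of_cases {x : ℤ} (h : x = 1 ∨ x = -1) : |x| ≤ 1 := by
  rcases h with h | h <;> simp [h]

lemma sgA_per (M v : ℕ) : sgA M (v + 2 * M) = sgA M v := by simp [sgA]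

lemma hh_per (M v : ℕ) : hh M (v + 2 * M) = hh M v := by simp [hh]

lemma sum_thr (m k : ℕ) (hk : k ≤ m) (a b : ℤ) :
    ∑ v ∈ Finset.range m, (if v % m < k then a else b) = k * a + (m - k) * b := by
  obtain ⟨d, rfl⟩ := Nat.exists_eq_add_of_le hk
  rw [Finset.sum_range_add]
  have h1 : ∑ v ∈ Finset.range k, (if v % (k + d) < k then a else b) = k * a := by
    rw [Finset.sum_congr rfl (g := fun _ => a)]
    · simp
    · intro v hv
      have := Finset.mem_range.1 hv
      rw [Nat.mod_eq_of_lt (by omega), if_pos this]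
  have h2 : ∑ v ∈ Finset.range d, (if (k + v) % (k + d) < k then a else b) = d * b := by
    rw [Finset.sum_congr rfl (g := fun _ => b)]
    · simp
    · intro v hv
      have := Finset.mem_range.1 hv
      rw [Nat.mod_eq_of_lt (by omega), if_neg (by omega)]
  rw [h1, h2]; push_cast; ring

lemma sum_sgA (M : ℕ) (hM : 1 ≤ M) : ∑ v ∈ Finset.range (2 * M), sgA M v = 2 := by
  unfold sgA
  rw [sum_thr _ _ (by omega)]; push_cast; ring

lemma sum_hh (M : ℕ) (hM : 1 ≤ M) : ∑ v ∈ Finset.range (2 * M), hh M v = -2 := by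
  unfold hh
  rw [sum_thr _ _ (by omega)]; push_cast [hM]; ring

lemma colr_per (M x v : ℕ) (hM : 1 ≤ M) :
    colr M x (v + 2 * M * (2 * M)) = colr M x v := by
  unfold colr
  rw [per_mul (sgA M) _ (sgA_per M), Nat.add_mul_div_left _ _ (by omega), ← add_assoc, hh_per]

lemma sum_colr (M x : ℕ) (hM : 1 ≤ M) :
    ∑ w ∈ Finset.range (2 * M * (2 * M)), colr M x w = sgA M x * (2 * (M : ℤ) ^ 2 + 2) := by
  rw [sum_range_block]
  have key : ∀ j, ∑ u ∈ Finset.range (2 * M), colr M x (u + 2 * M * j) =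
      sgA M x * M + 1 + (M - sgA M x) * hh M (j + x / (2 * M)) := by
    intro j
    have e : ∀ u ∈ Finset.range (2 * M), colr M x (u + 2 * M * j) =
        if u % (2 * M) < M + 1 then
          (if sgA M x = 1 then 1 else hh M (j + x / (2 * M))) else
          (if sgA M x = 1 then hh M (j + x / (2 * M)) else -1) := by
      intro u hu
      have hu := Finset.mem_range.1 hu
      unfold colr
      rw [per_mul (sgA M) _ (sgA_per M), Nat.add_mul_div_left _ _ (by omega),
        Nat.div_eq_of_lt hu, zero_add, add_comm j]
      have hs : sgA M u = if u % (2 * M) < M + 1 then 1 else -1 := rfl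
      rw [hs]
      rcases sgA_cases M x with h | h <;> rw [h] <;> split_ifs <;> simp_all
    rw [Finset.sum_congr rfl e, sum_thr _ _ (by omega)]
    rcases sgA_cases M x with h | h <;> rw [h] <;> norm_num [-mul_eq_mul_right_iff] <;> ring
  rw [Finset.sum_congr rfl (fun j _ => key j), Finset.sum_add_distrib, ← Finset.mul_sum,
    per_shift (hh M) _ (hh_per M), sum_hh M hM]
  simp
  ring

lemma row_approx (M x n : ℕ) (hM : 1 ≤ M) :
    |4 * (M : ℤ) ^ 2 * ∑ w ∈ Finset.range n, colr M x w - n * (sgA M x * (2 * (M : ℤ) ^ 2 + 2))|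
      ≤ 32 * (M : ℤ) ^ 4 := by
  have h := per_approx (colr M x) (2 * M * (2 * M)) (by positivity) (fun v => colr_per M x v hM)
    (fun i => abs_of_cases (colr_cases M x i)) n _ (sum_colr M x hM)
  push_cast at h
  convert h using 1
  · congr 2; ring
  · ring

lemma sg_approx (M n : ℕ) (hM : 1 ≤ M) :
    |2 * (M : ℤ) * ∑ w ∈ Finset.range n, sgA M w - n * 2| ≤ 8 * (M : ℤ) ^ 2 := by
  have h := per_approx (sgA M) (2 * M) (by positivity) (sgA_per M)
    (fun i => abs_of_cases (sgA_cases M i)) n _ (sum_sgA M hM)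
  push_cast at h
  convert h using 1
  ring

def colS (M n : ℕ) : Sym2 (Fin n) → ℤ :=
  Sym2.lift ⟨fun i j => colr M i j, fun i j => colr_symm M i j⟩

lemma colS_mk (M n : ℕ) (i j : Fin n) : colS M n s(i, j) = colr M i j := rfl

lemma colS_cases (M n : ℕ) (e : Sym2 (Fin n)) : colS M n e = 1 ∨ colS M n e = -1 := by
  induction e with | _ i j => exact colr_cases _ _ _

lemma row_eq (M n : ℕ) (x : Fin n) :
    ∑ w ∈ Finset.univ.filter (fun w => w ≠ x), colS M n s(x, w) =
      ∑ w ∈ Finset.range n, colr M x w - colr M x x := by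
  rw [← Fin.sum_univ_eq_sum_range (fun w => colr M x w) n, Finset.filter_ne',
    Finset.sum_erase_eq_sub (Finset.mem_univ x)]
  rfl

open Classical in
lemma red_count (n : ℕ) (c : Sym2 (Fin n) → ℤ) (hc : ∀ e, c e = 1 ∨ c e = -1) :
    ∑ x : Fin n, ∑ w ∈ Finset.univ.filter (fun w => w ≠ x), c s(x, w) =
      4 * (((⊤ : SimpleGraph (Fin n)).edgeFinset.filter fun e => c e = 1).card : ℤ)
        - n * (n - 1) := by
  let G : SimpleGraph (Fin n) := SimpleGraph.fromEdgeSet {e | c e = 1}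
  have hE : ((⊤ : SimpleGraph (Fin n)).edgeFinset.filter fun e => c e = 1) = G.edgeFinset := by
    ext e
    simp [G, and_comm]
  have hd : ∑ v, G.degree v = 2 * G.edgeFinset.card := by
    convert G.sum_degrees_eq_twice_card_edges
  rw [hE]
  have hrow : ∀ x : Fin n, ∑ w ∈ Finset.univ.filter (fun w => w ≠ x), c s(x, w) =
      2 * (G.degree x : ℤ) - (n - 1) := by
    intro x
    have h1 : ∀ w, c s(x, w) = 2 * (if c s(x, w) = 1 then 1 else 0) - 1 := by
      intro w; rcases hc s(x, w) with h | h <;> simp [h]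
    have h2 : G.degree x = ((Finset.univ.filter (fun w => w ≠ x)).filter
        (fun w => c s(x, w) = 1)).card := by
      rw [← SimpleGraph.card_neighborFinset_eq_degree]
      congr 1
      ext w
      simp [G, and_comm, eq_comm]
    have hpos : 1 ≤ n := by have := x.2; omega
    have h3 : (Finset.univ.filter (fun w => w ≠ x)).card = n - 1 := by
      rw [Finset.filter_ne', Finset.card_erase_of_mem (Finset.mem_univ x)]; simp
    rw [Finset.sum_congr rfl (fun w _ => h1 w), Finset.sum_sub_distrib, ← Finset.mul_sum,
      Finset.sum_boole, h2, Finset.sum_const, h3]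
    simp [hpos]
  rw [Finset.sum_congr rfl (fun x _ => hrow x), Finset.sum_sub_distrib, ← Finset.mul_sum,
    ← Nat.cast_sum, hd]
  simp
  ring

lemma total_approx (M n : ℕ) (hM : 1 ≤ M) :
    |4 * (M : ℤ) ^ 3 * ∑ x : Fin n, ∑ w ∈ Finset.univ.filter (fun w => w ≠ x), colS M n s(x, w)|
      ≤ n * ((2 * (M : ℤ) ^ 2 + 2) * (n + 4 * M ^ 2) + 36 * M ^ 5) := by
  have hM' : (1 : ℤ) ≤ M := by exact_mod_cast hM
  have h1 : ∀ x : Fin n, |4 * (M : ℤ) ^ 2 *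
      (∑ w ∈ Finset.univ.filter (fun w => w ≠ x), colS M n s(x, w))
        - n * (sgA M x * (2 * (M : ℤ) ^ 2 + 2))| ≤ 36 * (M : ℤ) ^ 4 := by
    intro x
    rw [row_eq]
    have a := row_approx M x n hM
    have b := abs_le.1 (abs_of_cases (colr_cases M x x))
    rw [abs_le] at a ⊢
    have : (M : ℤ) ^ 2 ≤ M ^ 4 := pow_le_pow_right₀ hM' (by norm_num)
    constructor <;> nlinarith [a.1, a.2, b.1, b.2, sq_nonneg (M : ℤ)]
  have h2 : |4 * (M : ℤ) ^ 2 * (∑ x : Fin n,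
      ∑ w ∈ Finset.univ.filter (fun w => w ≠ x), colS M n s(x, w))
        - n * ((∑ x ∈ Finset.range n, sgA M x) * (2 * (M : ℤ) ^ 2 + 2))| ≤ n * (36 * (M : ℤ) ^ 4) := by
    rw [← Fin.sum_univ_eq_sum_range (fun w => sgA M w) n, Finset.mul_sum, Finset.sum_mul,
      Finset.mul_sum, ← Finset.sum_sub_distrib]
    refine (Finset.abs_sum_le_sum_abs _ _).trans ?_
    refine (Finset.sum_le_sum (fun i _ => h1 i)).trans ?_
    simp
  have h3 := sg_approx M n hM
  generalize (∑ x : Fin n, ∑ w ∈ Finset.univ.filter (fun w => w ≠ x), colS M n s(x, w)) = X at *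
  generalize (∑ x ∈ Finset.range n, sgA M x) = Y at *
  have h4 : |(M : ℤ) * Y| ≤ n + 4 * M ^ 2 := by
    rw [abs_le] at h3 ⊢
    constructor <;> linarith [h3.1, h3.2, (by positivity : (0 : ℤ) ≤ n)]
  have e : 4 * (M : ℤ) ^ 3 * X = M * (4 * (M : ℤ) ^ 2 * X - n * (Y * (2 * (M : ℤ) ^ 2 + 2)))
      + n * ((2 * (M : ℤ) ^ 2 + 2) * (M * Y)) := by ring
  rw [e]
  refine (abs_add_le _ _).trans ?_
  rw [abs_mul, abs_mul (n : ℤ), abs_mul (2 * (M : ℤ) ^ 2 + 2), Nat.abs_cast, Nat.abs_cast,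
    abs_of_pos (by positivity : 0 < 2 * (M : ℤ) ^ 2 + 2)]
  have a1 : (M : ℤ) * |4 * (M : ℤ) ^ 2 * X - n * (Y * (2 * (M : ℤ) ^ 2 + 2))| ≤
      M * (n * (36 * (M : ℤ) ^ 4)) := by gcongr
  have a2 : (n : ℤ) * ((2 * (M : ℤ) ^ 2 + 2) * |(M : ℤ) * Y|) ≤
      n * ((2 * (M : ℤ) ^ 2 + 2) * (n + 4 * M ^ 2)) := by gcongr
  linarith

/-- There is `ε₀ > 0` such that for every `0 < ε < ε₀` there is `n₀`
such that for all `n ≥ n₀` there is a red/blue colouring `c` of the edges of `K_n`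
(red = `+1`, blue = `-1`) whose red density `d_R` satisfies `1/2 - ε ≤ d_R ≤ 1/2 + ε`,
and such that every copy `T` of the star on `n` vertices (i.e. every star centred at a
vertex `x`) satisfies `|c(T)| ≥ (1/2 + ε²)n`. -/
theorem unbalanced_stars_in_almost_balanced_colouring :
    ∃ ε₀ : ℝ, 0 < ε₀ ∧ ∀ ε : ℝ, 0 < ε → ε < ε₀ →
      ∃ n₀ : ℕ, ∀ n : ℕ, n₀ ≤ n →
        ∃ c : Sym2 (Fin n) → ℤ,
          (∀ e ∈ (⊤ : SimpleGraph (Fin n)).edgeFinset, c e = 1 ∨ c e = -1) ∧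
          (1 / 2 - ε ≤
              (((⊤ : SimpleGraph (Fin n)).edgeFinset.filter fun e => c e = 1).card : ℝ) /
                ((n : ℝ) * ((n : ℝ) - 1) / 2) ∧
            (((⊤ : SimpleGraph (Fin n)).edgeFinset.filter fun e => c e = 1).card : ℝ) /
                ((n : ℝ) * ((n : ℝ) - 1) / 2) ≤ 1 / 2 + ε) ∧
          ∀ x : Fin n,
            (1 / 2 + ε ^ 2) * n ≤
              |(∑ w ∈ Finset.univ.filter fun w => w ≠ x, c s(x, w) : ℝ)| := by
  refine ⟨1 / 20, by norm_num, fun ε hε hε0 => ?_⟩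
  obtain ⟨M, hMdef⟩ : ∃ M : ℕ, M = ⌊1 / (2 * ε)⌋₊ := ⟨_, rfl⟩
  have hM1 : (M : ℝ) ≤ 1 / (2 * ε) := hMdef ▸ Nat.floor_le (by positivity)
  have hM2 : 1 / (2 * ε) < M + 1 := hMdef ▸ Nat.lt_floor_add_one _
  rw [le_div_iff₀ (by positivity)] at hM1
  rw [div_lt_iff₀ (by positivity)] at hM2
  have hM10 : 10 ≤ M := by
    have : (9 : ℝ) < M := by nlinarith
    have : 9 < M := by exact_mod_cast this
    omega
  have hMr : (10 : ℝ) ≤ M := by exact_mod_cast hM10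
  refine ⟨100 * M ^ 4, fun n hn => ⟨colS M n, fun e _ => colS_cases M n e, ?_, ?_⟩⟩
  · have hnr : 100 * (M : ℝ) ^ 4 ≤ n := by exact_mod_cast hn
    have ht := total_approx M n (by omega)
    rw [red_count n _ (colS_cases M n)] at ht
    generalize hK : ((⊤ : SimpleGraph (Fin n)).edgeFinset.filter fun e => colS M n e = 1).card = K
    have hK' : (Finset.filter (fun e => colS M n e = 1)
      (⊤ : SimpleGraph (Fin n)).edgeFinset).card = K := by rw [← hK]
    have ht' : |4 * (M : ℤ) ^ 3 * (4 * (K : ℤ) - n * (n - 1))| ≤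
        n * ((2 * (M : ℤ) ^ 2 + 2) * (n + 4 * M ^ 2) + 36 * M ^ 5) := by
      rw [← hK']; convert ht
    have hR : |4 * (M : ℝ) ^ 3 * (4 * (K : ℝ) - n * (n - 1))| ≤
        n * ((2 * (M : ℝ) ^ 2 + 2) * (n + 4 * M ^ 2) + 36 * M ^ 5) := by exact_mod_cast ht'
    have hM4 : (10 : ℝ) ^ 4 ≤ (M : ℝ) ^ 4 := by gcongr
    have hn1 : (1 : ℝ) < n := by linarith
    have hD : (0 : ℝ) < n * (n - 1) := mul_pos (by linarith) (by linarith)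
    have hfin : (2 * (M : ℝ) ^ 2 + 2) * (n + 4 * M ^ 2) + 36 * M ^ 5 ≤
        4 * (M : ℝ) ^ 3 * (2 * ε * (n - 1)) := by
      have b1 : (M : ℝ) * (2 * ε) ≥ 9 / 10 := by nlinarith
      have b2 : 4 * (M : ℝ) ^ 3 * (2 * ε * (n - 1)) ≥ 4 * (M : ℝ) ^ 2 * (9 / 10 * (n - 1)) := by
        have : 4 * (M : ℝ) ^ 3 * (2 * ε * (n - 1)) =
          4 * (M : ℝ) ^ 2 * ((M * (2 * ε)) * (n - 1)) := by ring
        rw [this]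
        gcongr
      have c2 : (100 : ℝ) ≤ (M : ℝ) ^ 2 := by nlinarith
      have c3 : (M : ℝ) ^ 2 * (100 * (M : ℝ) ^ 4) ≤ (M : ℝ) ^ 2 * n := by gcongr
      have c4 : (M : ℝ) ^ 5 * 10 ≤ (M : ℝ) ^ 5 * M := by gcongr
      have c5 : (M : ℝ) ^ 4 * 100 ≤ (M : ℝ) ^ 4 * M ^ 2 := by gcongr
      have c6 : (100 : ℝ) * n ≤ (M : ℝ) ^ 2 * n := by gcongr
      have c7 : (100 : ℝ) * M ^ 2 ≤ (M : ℝ) ^ 2 * M ^ 2 := by gcongr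
      nlinarith
    have hA : |4 * (K : ℝ) - n * (n - 1)| ≤ 2 * ε * (n * (n - 1)) := by
      rw [abs_mul, abs_of_pos (by positivity : (0 : ℝ) < 4 * (M : ℝ) ^ 3)] at hR
      have hp : (0 : ℝ) < 4 * (M : ℝ) ^ 3 := by positivity
      refine le_of_mul_le_mul_left (hR.trans ?_) hp
      calc _ ≤ (n : ℝ) * (4 * (M : ℝ) ^ 3 * (2 * ε * (n - 1))) := by gcongr
        _ = _ := by ring
    rw [abs_le] at hA
    rw [le_div_iff₀ (by linarith), div_le_iff₀ (by linarith)]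
    constructor <;> nlinarith [hA.1, hA.2]
  · intro x
    have hnr : 100 * (M : ℝ) ^ 4 ≤ n := by exact_mod_cast hn
    have hr := row_eq M n x
    have ha := row_approx M x n (by omega)
    have hb := abs_le.1 (abs_of_cases (colr_cases M x x))
    have hs := sgA_cases M x
    have hcast : (∑ w ∈ Finset.univ.filter (fun w => w ≠ x), (colS M n s(x, w) : ℝ)) =
      ((∑ w ∈ Finset.range n, colr M x w - colr M x x : ℤ) : ℝ) := by
      rw [← hr]; push_cast; rfl
    rw [hcast]
    generalize ∑ w ∈ Finset.range n, colr M x w = R at *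
    generalize colr M x x = d at *
    have haR : |4 * (M : ℝ) ^ 2 * R - n * (sgA M x * (2 * (M : ℝ) ^ 2 + 2))| ≤ 32 * (M : ℝ) ^ 4 := by
      exact_mod_cast ha
    have hb1 : (-1 : ℝ) ≤ d := by exact_mod_cast hb.1
    have hb2 : (d : ℝ) ≤ 1 := by exact_mod_cast hb.2
    have hp : (0 : ℝ) < 4 * (M : ℝ) ^ 2 := by positivity
    have hn0 : (0 : ℝ) ≤ n := by positivity
    have hε2 : 4 * (M : ℝ) ^ 2 * ε ^ 2 ≤ 1 := by
      have : 4 * (M : ℝ) ^ 2 * ε ^ 2 = (M * (2 * ε)) ^ 2 := by ring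
      rw [this]
      exact pow_le_one₀ (by positivity) hM1
    have hε3 : 4 * (M : ℝ) ^ 2 * ε ^ 2 * n ≤ 1 * n := by gcongr
    have c2 : (100 : ℝ) ≤ (M : ℝ) ^ 2 := by nlinarith
    have c7 : (100 : ℝ) * M ^ 2 ≤ (M : ℝ) ^ 2 * M ^ 2 := by gcongr
    have hd1 : 4 * (M : ℝ) ^ 2 * d ≤ 4 * (M : ℝ) ^ 2 * 1 := by gcongr
    have hd2 : 4 * (M : ℝ) ^ 2 * (-1) ≤ 4 * (M : ℝ) ^ 2 * d := by gcongr
    rw [abs_le] at haR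
    rw [le_abs]
    push_cast
    rcases hs with h | h <;> rw [h] at haR <;> push_cast at haR
    · left
      refine le_of_mul_le_mul_left ?_ hp
      nlinarith [haR.1]
    · right
      refine le_of_mul_le_mul_left ?_ hp
      nlinarith [haR.2]
end

section
/- Let n be an integer, let H be a graph on n vertices with maximum degree Δ_H and minimum degree δ_H, and let c : E(K_n) → {−1, +1} be a balanced colouring of the edges of K_n. Then there exists a copy H' of H in K_n such that |c(H')| ≤ Δ_H + δ_H; in particular |c(H')| ≤ 2Δ_H. -/
open Finset in
theorem aux_step {n : ℕ} (H : SimpleGraph (Fin n)) [DecidableRel H.Adj]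
    (c : Sym2 (Fin n) → ℤ) (hc : ∀ e : Sym2 (Fin n), ¬ e.IsDiag → c e = 1 ∨ c e = -1)
    (s t : Equiv.Perm (Fin n)) (v x : Fin n) (ht : t = Equiv.swap v x) :
    |∑ e ∈ H.edgeFinset, c (Sym2.map (s * t) e) - ∑ e ∈ H.edgeFinset, c (Sym2.map s e)|
      ≤ 2 * ((H.degree v : ℤ) + H.degree x) := by
  classical
  rw [← Finset.sum_sub_distrib]
  have hsub : H.incidenceFinset v ∪ H.incidenceFinset x ⊆ H.edgeFinset :=
    Finset.union_subset (H.incidenceFinset_subset v) (H.incidenceFinset_subset x)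
  have hnd : ∀ (g : Equiv.Perm (Fin n)) (e : Sym2 (Fin n)), e ∈ H.edgeFinset →
      ¬ (Sym2.map g e).IsDiag := by
    intro g e he
    induction e with
    | _ a b =>
      rw [SimpleGraph.mem_edgeFinset, SimpleGraph.mem_edgeSet] at he
      simpa using he.ne
  rw [← Finset.sum_subset hsub]
  · refine (Finset.abs_sum_le_sum_abs _ _).trans ?_
    have h1 : ∀ e ∈ H.incidenceFinset v ∪ H.incidenceFinset x,
        |c (Sym2.map (s * t) e) - c (Sym2.map s e)| ≤ 2 := by
      intro e he
      have h := hsub he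
      rcases hc _ (hnd (s * t) e h) with h1 | h1 <;> rcases hc _ (hnd s e h) with h2 | h2 <;>
        rw [h1, h2] <;> norm_num
    refine (Finset.sum_le_card_nsmul _ _ 2 h1).trans ?_
    have h2 := Finset.card_union_le (H.incidenceFinset v) (H.incidenceFinset x)
    rw [H.card_incidenceFinset_eq_degree, H.card_incidenceFinset_eq_degree] at h2
    rw [nsmul_eq_mul]
    have h3 : (((H.incidenceFinset v ∪ H.incidenceFinset x).card : ℕ) : ℤ)
      ≤ (H.degree v : ℤ) + H.degree x := by exact_mod_cast h2
    linarith
  · intro e he hne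
    induction e with
    | _ a b =>
      rw [SimpleGraph.mem_edgeFinset, SimpleGraph.mem_edgeSet] at he
      simp only [Finset.mem_union, SimpleGraph.mem_incidenceFinset,
        SimpleGraph.incidenceSet, Set.mem_ofPred_eq, SimpleGraph.mem_edgeSet, he, true_and,
        Sym2.mem_iff, not_or] at hne
      obtain ⟨⟨h1, h2⟩, h3, h4⟩ := hne
      subst ht
      simp [Equiv.swap_apply_of_ne_of_ne (Ne.symm h1) (Ne.symm h3),
        Equiv.swap_apply_of_ne_of_ne (Ne.symm h2) (Ne.symm h4)]

theorem aux_const {n : ℕ} (c : Sym2 (Fin n) → ℤ) (e e' : Sym2 (Fin n))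
    (he : ¬ e.IsDiag) (he' : ¬ e'.IsDiag) :
    ∑ s : Equiv.Perm (Fin n), c (Sym2.map s e) = ∑ s : Equiv.Perm (Fin n), c (Sym2.map s e') := by
  have key : ∃ g : Equiv.Perm (Fin n), Sym2.map g e = e' := by
    induction e with
    | _ a b =>
    induction e' with
    | _ p q =>
      rw [Sym2.mk_isDiag_iff] at he he'
      refine ⟨(Equiv.swap (Equiv.swap a p b) q) * Equiv.swap a p, ?_⟩
      have h1 : Equiv.swap a p b ≠ p := by
        intro h
        apply he
        apply (Equiv.swap a p).injective
        rw [h, Equiv.swap_apply_left]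
      rw [Sym2.map_mk]
      simp [Equiv.swap_apply_of_ne_of_ne h1.symm he']
  obtain ⟨g, rfl⟩ := key
  rw [← Equiv.sum_comp (Equiv.mulRight g)]
  simp [Sym2.map_map]

theorem aux_sum {n : ℕ} (H : SimpleGraph (Fin n)) [DecidableRel H.Adj]
    (c : Sym2 (Fin n) → ℤ)
    (hbal : ∑ e ∈ (⊤ : SimpleGraph (Fin n)).edgeFinset, c e = 0) :
    ∑ s : Equiv.Perm (Fin n), ∑ e ∈ H.edgeFinset, c (Sym2.map s e) = 0 := by
  have hT : ∀ s : Equiv.Perm (Fin n),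
      ∑ e ∈ (⊤ : SimpleGraph (Fin n)).edgeFinset, c (Sym2.map s e) = 0 := by
    intro s
    rw [← hbal]
    refine Finset.sum_bijective (Sym2.map s)
      (Finite.injective_iff_bijective.1 (Sym2.map.injective s.injective)) ?_ ?_
    · intro e
      induction e with
      | _ a b => simp
    · intro e _
      rfl
  have hT2 : ∑ e ∈ (⊤ : SimpleGraph (Fin n)).edgeFinset,
      ∑ s : Equiv.Perm (Fin n), c (Sym2.map s e) = 0 := by
    rw [Finset.sum_comm]
    exact Finset.sum_eq_zero fun s _ => hT s
  rw [Finset.sum_comm]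
  refine Finset.sum_eq_zero fun e he => ?_
  have hd : ¬ e.IsDiag := H.not_isDiag_of_mem_edgeFinset he
  rw [Finset.sum_congr rfl (fun e' he' => aux_const c e' e
    (by simpa using he') hd), Finset.sum_const, nsmul_eq_mul] at hT2
  rcases mul_eq_zero.1 hT2 with h | h
  · exfalso
    have h0 : (⊤ : SimpleGraph (Fin n)).edgeFinset.card = 0 := by exact_mod_cast h
    rw [Finset.card_eq_zero] at h0
    have : e ∈ (⊤ : SimpleGraph (Fin n)).edgeFinset :=
      SimpleGraph.edgeFinset_mono le_top he
    rw [h0] at this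
    simp at this
  · exact h

theorem aux_main {n : ℕ} [Nonempty (Fin n)] (H : SimpleGraph (Fin n)) [DecidableRel H.Adj]
    (c : Sym2 (Fin n) → ℤ) (hc : ∀ e : Sym2 (Fin n), ¬ e.IsDiag → c e = 1 ∨ c e = -1)
    (hbal : ∑ e ∈ (⊤ : SimpleGraph (Fin n)).edgeFinset, c e = 0) :
    ∃ s : Equiv.Perm (Fin n),
      |∑ e ∈ H.edgeFinset, c (Sym2.map s e)| ≤ (H.maxDegree : ℤ) + H.minDegree := by
  by_contra! hcon
  obtain ⟨v, hv⟩ := H.exists_minimal_degree_vertex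
  have hsum := aux_sum H c hbal
  have hst := aux_step H c hc
  generalize hF : (fun s : Equiv.Perm (Fin n) => ∑ e ∈ H.edgeFinset, c (Sym2.map s e)) = F
  have hF' : ∀ s : Equiv.Perm (Fin n), ∑ e ∈ H.edgeFinset, c (Sym2.map s e) = F s :=
    fun s => congrFun hF s
  simp only [hF'] at hcon hsum hst
  have hstar : ∀ x s, 0 < F (s * Equiv.swap v x) ↔ 0 < F s := by
    intro x s
    have h1 := hst s _ v x rfl
    have h2 : (H.degree x : ℤ) ≤ H.maxDegree := by exact_mod_cast H.degree_le_maxDegree x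
    rw [hv] at hcon
    have h3 := hcon s
    have h4 := hcon (s * Equiv.swap v x)
    rw [abs_le] at h1
    rw [lt_abs] at h3 h4
    omega
  have hswap : ∀ x y s, x ≠ y → (0 < F (s * Equiv.swap x y) ↔ 0 < F s) := by
    intro x y s hxy
    by_cases hx : x = v
    · subst hx; exact hstar y s
    by_cases hy : y = v
    · subst hy; rw [Equiv.swap_comm]; exact hstar x s
    have : Equiv.swap x y = Equiv.swap v x * Equiv.swap v y * Equiv.swap v x := by
      rw [Equiv.swap_comm v y, Equiv.swap_mul_swap_mul_swap hy hxy.symm]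
    rw [this, ← mul_assoc, ← mul_assoc, hstar, hstar, hstar]
  have hall : ∀ g s, 0 < F (s * g) ↔ 0 < F s := by
    intro g
    induction g using Equiv.Perm.swap_induction_on with
    | one => simp
    | swap_mul g x y hxy ih =>
      intro s
      rw [← mul_assoc, ih, hswap _ _ _ hxy]
  have hall1 : ∀ g, 0 < F g ↔ 0 < F 1 := fun g => by simpa using hall g 1
  by_cases h : 0 < F 1
  · have := Finset.sum_pos (fun g (_ : g ∈ Finset.univ) => (hall1 g).2 h) Finset.univ_nonempty
    omega
  · have : ∀ g ∈ (Finset.univ : Finset (Equiv.Perm (Fin n))), F g < 0 := by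
      intro g _
      have h1 := hcon g
      have h2 := mt (hall1 g).1 h
      rw [lt_abs] at h1
      omega
    have := Finset.sum_neg this Finset.univ_nonempty
    omega

/-- If `c` is a balanced `±1`-colouring of the edges of `K_n` and `H`
is any graph on `n` vertices with maximum degree `Δ_H` and minimum degree `δ_H`, then
there is a copy `H'` of `H` in `K_n` with `|c(H')| ≤ Δ_H + δ_H`; in particular
`|c(H')| ≤ 2Δ_H`. -/
theorem almost_balanced_spanning_graph
    (n : ℕ) (H : SimpleGraph (Fin n)) [DecidableRel H.Adj]
    (ΔH δH : ℕ) (hΔ : H.maxDegree = ΔH) (hδ : H.minDegree = δH)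
    (c : Sym2 (Fin n) → ℤ)
    (hc : ∀ e ∈ (⊤ : SimpleGraph (Fin n)).edgeFinset, c e = 1 ∨ c e = -1)
    (hbal : ∑ e ∈ (⊤ : SimpleGraph (Fin n)).edgeFinset, c e = 0) :
    ∃ f : Fin n ↪ Fin n,
      |∑ e ∈ H.edgeFinset, c (Sym2.map (⇑f) e)| ≤ (ΔH : ℤ) + δH ∧
      |∑ e ∈ H.edgeFinset, c (Sym2.map (⇑f) e)| ≤ 2 * ΔH := by
  subst hΔ hδ
  have hc' : ∀ e : Sym2 (Fin n), ¬ e.IsDiag → c e = 1 ∨ c e = -1 := by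
    intro e he
    exact hc e (by simpa using he)
  rcases isEmpty_or_nonempty (Fin n) with hn | hn
  · refine ⟨Function.Embedding.refl _, ?_⟩
    have : H.edgeFinset = ∅ := by
      ext e
      induction e with
      | _ a b => exact hn.elim a
    rw [this]
    simp
  · obtain ⟨s, hs⟩ := aux_main H c hc' hbal
    have hle : (H.minDegree : ℤ) ≤ H.maxDegree := by
      exact_mod_cast H.minDegree_le_maxDegree
    exact ⟨s.toEmbedding, hs, hs.trans (by linarith)⟩
end

section
/- Let n be a positive integer divisible by 4, and identify the vertex set of K_n with {u_i : i ∈ [n/2]} ∪ {v_i : i ∈ [n/2]}. Define c₀ : E(K_n) → {−1, +1} by: c₀(u_i u_j) = −1 for all i, j; c₀(v_i v_j) = +1 for all i, j; and c₀(u_i v_j) = −1 if i + j is odd and c₀(u_i v_j) = +1 if i + j is even. Then c₀ is a balanced colouring, and every copy T in K_n of the star on n vertices satisfies |c₀(T)| = (n − 2)/2. -/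
theorem aux_alt (a k : ℕ) :
    ∑ j ∈ Finset.range (2 * k), (if Odd ((a + 1) + (j + 1)) then (-1 : ℤ) else 1) = 0 := by
  induction k with
  | zero => simp
  | succ k ih =>
    rw [show 2 * (k + 1) = 2 * k + 1 + 1 by ring, Finset.sum_range_succ, Finset.sum_range_succ, ih]
    rcases Nat.even_or_odd a with h | h <;> simp [Nat.odd_add, parity_simps, h]

theorem aux_altF (a m : ℕ) (hm : Even m) :
    ∑ j : Fin m, (if Odd ((a + 1) + ((j : ℕ) + 1)) then (-1 : ℤ) else 1) = 0 := by
  obtain ⟨k, rfl⟩ := hm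
  rw [Fin.sum_univ_eq_sum_range (fun j => if Odd ((a + 1) + (j + 1)) then (-1 : ℤ) else 1),
    ← two_mul]
  exact aux_alt a k

theorem aux_hand {V : Type*} [Fintype V] [DecidableEq V] (c : Sym2 V → ℤ) :
    ∑ x : V, ∑ w ∈ Finset.univ.filter (fun w => w ≠ x), c s(x, w)
      = 2 * ∑ e ∈ (⊤ : SimpleGraph V).edgeFinset, c e := by
  have h1 : ∑ x : V, ∑ w ∈ Finset.univ.filter (fun w => w ≠ x), c s(x, w)
      = ∑ p ∈ (Finset.univ : Finset V).offDiag, c s(p.1, p.2) := by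
    simp only [Finset.sum_filter]
    rw [← Fintype.sum_prod_type' (f := fun x w => if w ≠ x then c s(x, w) else 0),
      ← Finset.sum_filter]
    refine Finset.sum_congr ?_ fun _ _ => rfl
    ext p
    simp [eq_comm]
  rw [h1, ← Finset.sum_fiberwise_of_maps_to (t := (⊤ : SimpleGraph V).edgeFinset)
    (g := fun p : V × V => s(p.1, p.2)), Finset.mul_sum]
  · refine Finset.sum_congr rfl fun e he => ?_
    induction e with
    | _ a b =>
    have hab : a ≠ b := by simpa using he
    have : (Finset.univ : Finset V).offDiag.filter (fun p => s(p.1, p.2) = s(a, b))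
        = {(a, b), (b, a)} := by
      ext ⟨x, y⟩
      simp only [Finset.mem_filter, Finset.mem_offDiag, Finset.mem_univ, true_and, Sym2.eq_iff,
        Finset.mem_insert, Finset.mem_singleton, Prod.mk.injEq]
      grind
    rw [this, Finset.sum_pair (by simp [hab]), Sym2.eq_swap (a := b)]
    ring
  · rintro ⟨x, y⟩ h
    simpa using h


/-- Let `n > 0` be divisible by `4` and identify the vertex set of
`K_n` with `{u_i : i ∈ [n/2]} ∪ {v_i : i ∈ [n/2]}` (here `u_i = Sum.inl i` and
`v_i = Sum.inr i`, with `i ∈ [n/2]` represented one-based as `(i : ℕ) + 1` for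
`i : Fin (n/2)`). Let `c₀` colour every edge `u_i u_j` with `-1`, every edge `v_i v_j`
with `+1`, and an edge `u_i v_j` with `-1` iff `i + j` is odd. Then `c₀` is balanced,
and every copy `T` of the star on `n` vertices (i.e. every star centred at a vertex)
satisfies `|c₀(T)| = (n - 2)/2`. -/
theorem star_imbalance_construction
    (n : ℕ) (hn : 0 < n) (h4 : 4 ∣ n)
    (c₀ : Sym2 (Fin (n / 2) ⊕ Fin (n / 2)) → ℤ)
    (hu : ∀ i j : Fin (n / 2), i ≠ j → c₀ s(Sum.inl i, Sum.inl j) = -1)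
    (hv : ∀ i j : Fin (n / 2), i ≠ j → c₀ s(Sum.inr i, Sum.inr j) = 1)
    (huv : ∀ i j : Fin (n / 2),
      c₀ s(Sum.inl i, Sum.inr j) =
        if Odd (((i : ℕ) + 1) + ((j : ℕ) + 1)) then -1 else 1) :
    (∑ e ∈ (⊤ : SimpleGraph (Fin (n / 2) ⊕ Fin (n / 2))).edgeFinset, c₀ e = 0) ∧
      ∀ x : Fin (n / 2) ⊕ Fin (n / 2),
        |∑ w ∈ Finset.univ.filter fun w => w ≠ x, c₀ s(x, w)| = ((n : ℤ) - 2) / 2 := by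
  have hm : Even (n / 2) := by
    obtain ⟨k, rfl⟩ := h4
    exact ⟨k, by omega⟩
  have cnt : ∀ (i : Fin (n / 2)) (z : ℤ),
      ∑ j : Fin (n / 2), (if j ≠ i then z else 0) = (((n / 2 : ℕ) : ℤ) - 1) * z := by
    intro i z
    have : 1 ≤ n / 2 := by have := i.2; omega
    rw [← Finset.sum_filter, Finset.sum_const, Finset.filter_ne', Finset.card_erase_of_mem (by simp)]
    simp [Nat.cast_sub this]
  have su : ∀ i : Fin (n / 2), ∑ w ∈ Finset.univ.filter (fun w => w ≠ Sum.inl i),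
      c₀ s(Sum.inl i, w) = -(((n / 2 : ℕ) : ℤ) - 1) := by
    intro i
    rw [Finset.sum_filter, Fintype.sum_sum_type]
    have h1 : ∀ j : Fin (n / 2), (if (Sum.inl j : Fin (n / 2) ⊕ Fin (n / 2)) ≠ Sum.inl i then
        c₀ s(Sum.inl i, Sum.inl j) else 0) = if j ≠ i then -1 else 0 := by
      intro j
      by_cases h : j = i
      · simp [h]
      · simp [h, hu i j (Ne.symm h)]
    have h2 : ∀ j : Fin (n / 2), (if (Sum.inr j : Fin (n / 2) ⊕ Fin (n / 2)) ≠ Sum.inl i then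
        c₀ s(Sum.inl i, Sum.inr j) else 0) =
        if Odd (((i : ℕ) + 1) + ((j : ℕ) + 1)) then -1 else 1 := by
      intro j
      rw [if_pos (by simp), huv]
    rw [Finset.sum_congr rfl fun j _ => h1 j, Finset.sum_congr rfl fun j _ => h2 j, cnt,
      aux_altF _ _ hm]
    ring
  have sv : ∀ i : Fin (n / 2), ∑ w ∈ Finset.univ.filter (fun w => w ≠ Sum.inr i),
      c₀ s(Sum.inr i, w) = (((n / 2 : ℕ) : ℤ) - 1) := by
    intro i
    rw [Finset.sum_filter, Fintype.sum_sum_type]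
    have h1 : ∀ j : Fin (n / 2), (if (Sum.inr j : Fin (n / 2) ⊕ Fin (n / 2)) ≠ Sum.inr i then
        c₀ s(Sum.inr i, Sum.inr j) else 0) = if j ≠ i then 1 else 0 := by
      intro j
      by_cases h : j = i
      · simp [h]
      · simp [h, hv i j (Ne.symm h)]
    have h2 : ∀ j : Fin (n / 2), (if (Sum.inl j : Fin (n / 2) ⊕ Fin (n / 2)) ≠ Sum.inr i then
        c₀ s(Sum.inr i, Sum.inl j) else 0) =
        if Odd (((i : ℕ) + 1) + ((j : ℕ) + 1)) then -1 else 1 := by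
      intro j
      rw [if_pos (by simp), Sym2.eq_swap, huv, add_comm]
    rw [Finset.sum_congr rfl fun j _ => h1 j, Finset.sum_congr rfl fun j _ => h2 j, cnt,
      aux_altF _ _ hm]
    ring
  constructor
  · have h := aux_hand c₀
    rw [Fintype.sum_sum_type, Finset.sum_congr rfl fun j _ => su j,
      Finset.sum_congr rfl fun j _ => sv j, Finset.sum_neg_distrib] at h
    linarith
  · rintro (i | i)
    · rw [su, abs_neg, abs_of_nonneg (by omega)]
      omega
    · rw [sv, abs_of_nonneg (by omega)]
      omega
end
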